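/- The canonical monoid homomorphism from the positive monoid Γ₊ = Γ₊(W,γ) to the poset group Γ = Γ(W,γ), induced by sending each generator ⟨w⟩ of the monoid presentation to the corresponding generator ⟨w⟩ of the group presentation, is injective. Equivalently, if two positive words in the generators ⟨w⟩ represent the same element of Γ, then they are positively equal, i.e. they represent the same element of Γ₊. -/

import Mathlib

/-!
The proof has two halves: the interval `[1,γ]` is a meet semilattice, and this makes `Γ₊` a monoid
of Garside type, which embeds into a group of fractions.

*Meets.* Let `W` act on `B → ℝ` by the geometric representation `geo`; averaging gives an invariant
inner product `averageForm`. By Carter's lemma (`rlen_eq_finrank_movedSpace`) the reflection length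
of `w` is the dimension of its moved space `im (1 - w)`, and below a common element the reflection
order is inclusion of moved spaces (`rle_of_movedSpace_le`). Let `rootCone u` be the cone generated
by the positive roots in the moved space of `u`. The key statement
(`not_isConeCounterexample_wordProd`) is that a point `x` common to `rootCone u` and `rootCone w`,
with `u` and `w` below `c = s₁ ⋯ sₙ` for distinct simple reflections `sᵢ`, lies in the moved space
of some common lower bound of `u` and `w`. By induction on `n`: if the simple root of `s₁` lies in
both moved spaces, it can be split off; otherwise the whole configuration can be conjugated by `s₁`,
which replaces `c` by `s₂ ⋯ sₙ s₁`. If the first case never occurs, then the whole `c`-orbit of `x`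
is nonnegative, while its sum is fixed by `c` and lies in the moved space of `c`, hence vanishes; so
`x = 0`. Applied to generic positive combinations of the positive roots common to the moved spaces
of `u` and `w`, the key statement produces the meet of `u` and `w`.

*Embedding.* The monoid `Γ₊` acts on pairs `(h, m)` with `h ∈ [1,γ]` and `m ∈ Γ₊`, thought of as
products `⟨h⟩ m`: the generator `⟨p⟩` sends `(h, m)` to `(p a, ⟨a⁻¹ h⟩ m)`, where `a` is the meet of
`p⁻¹ γ` and `h`. Since `⟨γ⟩` sends `(h, m)` to `(γ, ⟨h⟩ m)`, it is left cancellable; as conjugation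
by `γ` gives `⟨γ⟩ m = ψ(m) ⟨γ⟩` for an automorphism `ψ`, it is also right cancellable, and its
powers form an Ore set. So `Γ₊` embeds into the Ore localization at `⟨γ⟩`, in which all generators
are invertible, and this embedding factors through `Γ`.
-/

variable {B : Type*} {W : Type*} [Group W] {M : CoxeterMatrix B}

/-- The reflection length of `w`: the least `k` such that `w` is a product of `k`
reflections (conjugates of simple reflections). -/
noncomputable def rlen (cs : CoxeterSystem M W) (w : W) : ℕ :=
  sInf {k | ∃ l : List W, (∀ t ∈ l, cs.IsReflection t) ∧ l.length = k ∧ l.prod = w}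

/-- The reflection (absolute) order on `W`: `u ≤ w` iff `ℓ(w) = ℓ(u) + ℓ(u⁻¹w)`. -/
def rle (cs : CoxeterSystem M W) (u w : W) : Prop :=
  rlen cs w = rlen cs u + rlen cs (u⁻¹ * w)

/-- A Coxeter element: a conjugate of a product of all the simple reflections,
each occurring exactly once, in some order. -/
def IsCoxeterElement [Fintype B] (cs : CoxeterSystem M W) (γ : W) : Prop :=
  ∃ (v : W) (l : List B), l.Nodup ∧ (∀ i : B, i ∈ l) ∧ γ = v * cs.wordProd l * v⁻¹

/-- The generating set of the poset group/monoid: the interval `[1,γ]` minus the identity. -/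
abbrev NCGen (cs : CoxeterSystem M W) (γ : W) : Type _ :=
  {w : W // w ≠ 1 ∧ rle cs w γ}

/-- The defining relations of the positive monoid `Γ₊(W,γ)`:
`⟨w₁⟩⟨w₂⟩ = ⟨w₃⟩` whenever `w₁w₂ = w₃` in `W` and `ℓ(w₁) + ℓ(w₂) = ℓ(w₃)`. -/
def posRels (cs : CoxeterSystem M W) (γ : W) :
    FreeMonoid (NCGen cs γ) → FreeMonoid (NCGen cs γ) → Prop :=
  fun x y => ∃ w₁ w₂ w₃ : NCGen cs γ,
    x = FreeMonoid.of w₁ * FreeMonoid.of w₂ ∧ y = FreeMonoid.of w₃ ∧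
    (w₁ : W) * (w₂ : W) = (w₃ : W) ∧
    rlen cs (w₁ : W) + rlen cs (w₂ : W) = rlen cs (w₃ : W)

/-- The positive monoid `Γ₊(W,γ)`, presented by the generators `⟨w⟩`, `w ∈ [1,γ] \ {1}`,
and the relations `posRels`. -/
abbrev PosMonoid (cs : CoxeterSystem M W) (γ : W) := PresentedMonoid (posRels cs γ)

open Classical in
/-- The generator `⟨w⟩` of `Γ₊(W,γ)` for `w ∈ [1,γ]`, interpreting `⟨1⟩` as the
identity of the monoid (and defaulting to the identity off the interval). -/
noncomputable def pgen (cs : CoxeterSystem M W) (γ : W) (w : W) : PosMonoid cs γ :=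
  if h : w ≠ 1 ∧ rle cs w γ then PresentedMonoid.of (posRels cs γ) ⟨w, h⟩ else 1

/-- The defining relations of the poset group `Γ(W,γ)`:
`⟨w₁⟩⟨w₂⟩ = ⟨w₃⟩` whenever `w₁w₂ = w₃` in `W` and `ℓ(w₁) + ℓ(w₂) = ℓ(w₃)`. -/
def posetGroupRels (cs : CoxeterSystem M W) (γ : W) : Set (FreeGroup (NCGen cs γ)) :=
  {x | ∃ w₁ w₂ w₃ : NCGen cs γ,
    x = FreeGroup.of w₁ * FreeGroup.of w₂ * (FreeGroup.of w₃)⁻¹ ∧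
    (w₁ : W) * (w₂ : W) = (w₃ : W) ∧
    rlen cs (w₁ : W) + rlen cs (w₂ : W) = rlen cs (w₃ : W)}

/-- The poset group `Γ(W,γ)`, presented by the generators `⟨w⟩`, `w ∈ [1,γ] \ {1}`,
and the relations `posetGroupRels`. -/
abbrev PosetGroup (cs : CoxeterSystem M W) (γ : W) := PresentedGroup (posetGroupRels cs γ)

/-- The canonical monoid homomorphism `Γ₊(W,γ) → Γ(W,γ)`, induced by sending each
generator `⟨w⟩` of the monoid presentation to the corresponding group generator. -/
def canHom (cs : CoxeterSystem M W) (γ : W) : PosMonoid cs γ →* PosetGroup cs γ :=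
  PresentedMonoid.lift (fun x => PresentedGroup.of (rels := posetGroupRels cs γ) x) (by
    intro a b hab
    obtain ⟨w₁, w₂, w₃, ha, hb, hmul, hlen⟩ := hab
    subst ha hb
    have hmem : FreeGroup.of w₁ * FreeGroup.of w₂ * (FreeGroup.of w₃)⁻¹ ∈
        posetGroupRels cs γ := ⟨w₁, w₂, w₃, rfl, hmul, hlen⟩
    have h1 : (PresentedGroup.of (rels := posetGroupRels cs γ) w₁) *
        PresentedGroup.of w₂ * (PresentedGroup.of w₃)⁻¹ = 1 :=
      (QuotientGroup.eq_one_iff _).mpr (Subgroup.subset_normalClosure hmem)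
    have h2 : (PresentedGroup.of (rels := posetGroupRels cs γ) w₁) *
        PresentedGroup.of w₂ = PresentedGroup.of w₃ := mul_inv_eq_one.mp h1
    simpa using h2)

/-! ### Reflection length and reflection order -/

section ReflectionOrder

variable (cs : CoxeterSystem M W)

theorem rlen_prod_le {l : List W} (hl : ∀ t ∈ l, cs.IsReflection t) :
    rlen cs l.prod ≤ l.length :=
  Nat.sInf_le ⟨l, hl, rfl, rfl⟩

theorem exists_reflections_prod_eq (w : W) :
    ∃ l : List W, (∀ t ∈ l, cs.IsReflection t) ∧ l.length = rlen cs w ∧ l.prod = w := by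
  obtain ⟨ω, rfl⟩ := cs.wordProd_surjective w
  have hω : ∀ t ∈ ω.map cs.simple, cs.IsReflection t := by
    simpa using fun i _ => cs.isReflection_simple i
  exact Nat.sInf_mem (s := {k | ∃ l : List W, (∀ t ∈ l, cs.IsReflection t) ∧ l.length = k ∧
    l.prod = cs.wordProd ω}) ⟨_, _, hω, rfl, rfl⟩

@[simp]
theorem rlen_one : rlen cs 1 = 0 :=
  Nat.le_zero.1 (rlen_prod_le cs (l := []) (by simp))

variable {cs} in
theorem eq_one_of_rlen_eq_zero {w : W} (h : rlen cs w = 0) : w = 1 := by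
  obtain ⟨l, -, hl, rfl⟩ := exists_reflections_prod_eq cs w
  rw [List.length_eq_zero_iff.1 (hl.trans h), List.prod_nil]

theorem rlen_mul_le (u v : W) : rlen cs (u * v) ≤ rlen cs u + rlen cs v := by
  obtain ⟨k, hk, hku, rfl⟩ := exists_reflections_prod_eq cs u
  obtain ⟨l, hl, hlv, rfl⟩ := exists_reflections_prod_eq cs v
  rw [← List.prod_append, ← hku, ← hlv, ← List.length_append]
  exact rlen_prod_le cs fun t ht => (List.mem_append.1 ht).elim (hk t) (hl t)

theorem rlen_conj_le (g w : W) : rlen cs (g * w * g⁻¹) ≤ rlen cs w := by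
  obtain ⟨l, hl, hlw, rfl⟩ := exists_reflections_prod_eq cs w
  rw [← MulAut.conj_apply, map_list_prod, ← hlw, ← List.length_map (MulAut.conj g)]
  refine rlen_prod_le cs fun t ht => ?_
  obtain ⟨s, hs, rfl⟩ := List.mem_map.1 ht
  exact (hl s hs).conj g

@[simp]
theorem rlen_conj (g w : W) : rlen cs (g * w * g⁻¹) = rlen cs w := by
  refine (rlen_conj_le cs g w).antisymm ?_
  simpa [mul_assoc] using rlen_conj_le cs g⁻¹ (g * w * g⁻¹)

variable {cs} {u v w z : W}

theorem rle_refl (u : W) : rle cs u u := by simp [rle]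

theorem one_rle (u : W) : rle cs 1 u := by simp [rle]

theorem rle_of_rlen_add_le (h : rlen cs u + rlen cs (u⁻¹ * w) ≤ rlen cs w) : rle cs u w :=
  h.antisymm' <| by simpa using rlen_mul_le cs u (u⁻¹ * w)

theorem rle.trans (huv : rle cs u v) (hvw : rle cs v w) : rle cs u w := by
  apply rle_of_rlen_add_le
  have := rlen_mul_le cs (u⁻¹ * v) (v⁻¹ * w)
  rw [mul_assoc, mul_inv_cancel_left] at this
  unfold rle at huv hvw
  omega

theorem rle.antisymm (huv : rle cs u v) (hvu : rle cs v u) : u = v := by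
  unfold rle at huv hvu
  exact inv_mul_eq_one.1 (eq_one_of_rlen_eq_zero (cs := cs) (by omega))

theorem rle.conj (h : rle cs u v) (g : W) : rle cs (g * u * g⁻¹) (g * v * g⁻¹) := by
  rw [rle, show (g * u * g⁻¹)⁻¹ * (g * v * g⁻¹) = g * (u⁻¹ * v) * g⁻¹ by group, rlen_conj,
    rlen_conj, rlen_conj]
  exact h

theorem rle.inv_mul (h : rle cs u w) : rle cs (u⁻¹ * w) w := by
  rw [rle, show (u⁻¹ * w)⁻¹ * w = w⁻¹ * u * w⁻¹⁻¹ by group, rlen_conj, add_comm]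
  exact h

theorem rle.mul_inv (h : rle cs u w) : rle cs (w * u⁻¹) w := by
  have hconj := rlen_conj cs u⁻¹ (w * u⁻¹)
  rw [show u⁻¹ * (w * u⁻¹) * u⁻¹⁻¹ = u⁻¹ * w by group] at hconj
  rw [rle, show (w * u⁻¹)⁻¹ * w = u by group, ← hconj, add_comm]
  exact h

theorem rle.inv_mul_of_rle (huv : rle cs u v) (hvw : rle cs v w) :
    rle cs (u⁻¹ * v) (u⁻¹ * w) := by
  have huw := huv.trans hvw
  rw [rle, show (u⁻¹ * v)⁻¹ * (u⁻¹ * w) = v⁻¹ * w by group]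
  unfold rle at huv hvw huw
  omega

theorem rle.mul_rle_and_rle_mul (huw : rle cs u w) (hz : rle cs z (u⁻¹ * w)) :
    rle cs (u * z) w ∧ rle cs u (u * z) := by
  have h₁ := rlen_mul_le cs u z
  have h₂ := rlen_mul_le cs (u * z) ((u * z)⁻¹ * w)
  rw [mul_inv_cancel_left] at h₂
  unfold rle at huw hz ⊢
  rw [inv_mul_cancel_left]
  rw [← mul_assoc, ← mul_inv_rev] at hz
  omega

theorem rle.mul_rle (huw : rle cs u w) (hz : rle cs z (u⁻¹ * w)) : rle cs (u * z) w :=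
  (huw.mul_rle_and_rle_mul hz).1

theorem rle.rle_mul (huw : rle cs u w) (hz : rle cs z (u⁻¹ * w)) : rle cs u (u * z) :=
  (huw.mul_rle_and_rle_mul hz).2

end ReflectionOrder

section Meets

variable (cs : CoxeterSystem M W)

/-- `m` is the meet (greatest lower bound) of `u` and `w` for the reflection order. -/
structure IsMeet (u w m : W) : Prop where
  left : rle cs m u
  right : rle cs m w
  greatest : ∀ ⦃z⦄, rle cs z u → rle cs z w → rle cs z m

/-- The interval `[1,γ]` has binary meets: it is a meet semilattice. -/
def HasMeets (γ : W) : Prop :=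
  ∀ ⦃u w⦄, rle cs u γ → rle cs w γ → ∃ m, IsMeet cs u w m

variable {cs} {u v w m : W}

theorem IsMeet.of_rle_left {b : W} (hb : IsMeet cs w v b) (huw : rle cs u w)
    (hm : IsMeet cs u v m) : IsMeet cs u b m :=
  ⟨hm.left, hb.greatest (hm.left.trans huw) hm.right,
    fun _ hu hzb => hm.greatest hu (hzb.trans hb.right)⟩

theorem IsMeet.conj (h : IsMeet cs u w m) (g : W) :
    IsMeet cs (g * u * g⁻¹) (g * w * g⁻¹) (g * m * g⁻¹) := by
  refine ⟨h.left.conj g, h.right.conj g, fun z hu hw => ?_⟩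
  have hz := (h.greatest (z := g⁻¹ * z * g)
    (by simpa [mul_assoc] using hu.conj g⁻¹) (by simpa [mul_assoc] using hw.conj g⁻¹)).conj g
  simpa [mul_assoc] using hz

theorem HasMeets.conj {γ : W} (h : HasMeets cs γ) (g : W) : HasMeets cs (g * γ * g⁻¹) := by
  intro u w hu hw
  obtain ⟨m, hm⟩ := h (u := g⁻¹ * u * g) (w := g⁻¹ * w * g)
    (by simpa [mul_assoc] using hu.conj g⁻¹) (by simpa [mul_assoc] using hw.conj g⁻¹)
  exact ⟨_, by simpa [mul_assoc] using hm.conj g⟩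

theorem IsMeet.eq_mul {q a b c d : W} (hqa : rle cs q a) (hqb : rle cs q (q * b))
    (hc : IsMeet cs a (q * b) c) (hd : IsMeet cs (q⁻¹ * a) b d) : c = q * d := by
  have hdb : rle cs d (q⁻¹ * (q * b)) := by rw [inv_mul_cancel_left]; exact hd.right
  have hqc : rle cs q c := hc.greatest hqa hqb
  have hcb : rle cs (q⁻¹ * c) b := by simpa using hqc.inv_mul_of_rle hc.right
  have hcd : rle cs (q⁻¹ * c) (q⁻¹ * (q * d)) := by
    rw [inv_mul_cancel_left]
    exact hd.greatest (hqc.inv_mul_of_rle hc.left) hcb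
  refine rle.antisymm (cs := cs) ?_ (hc.greatest (hqa.mul_rle hd.left) (hqb.mul_rle hdb))
  simpa using (hqa.rle_mul hd.left).mul_rle hcd

end Meets

/-! ### The Garside structure of the positive monoid -/

theorem exists_pow_mul_eq_mul_pow {N : Type*} [Monoid N] {δ : N}
    (hδ : ∀ m, ∃ m', δ * m = m' * δ) (k : ℕ) (m : N) : ∃ m', δ ^ k * m = m' * δ ^ k := by
  induction k with
  | zero => exact ⟨m, by simp⟩
  | succ k ih =>
    obtain ⟨m', hm'⟩ := ih
    obtain ⟨m'', hm''⟩ := hδ m'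
    exact ⟨m'', by rw [pow_succ', mul_assoc, hm', ← mul_assoc, hm'', mul_assoc]⟩

theorem exists_injective_isUnit_map.{u} {N : Type u} [Monoid N] {δ : N} (hreg : IsRegular δ)
    (hδ : ∀ m, ∃ m', δ * m = m' * δ) :
    ∃ (N' : Type u) (_ : Monoid N') (ι : N →* N'), Function.Injective ι ∧ IsUnit (ι δ) := by
  have hcomm (m : N) (s : Submonoid.powers δ) : ∃ m', (s : N) * m = m' * s := by
    obtain ⟨_, k, rfl⟩ := s
    exact exists_pow_mul_eq_mul_pow hδ k m
  let _ : OreLocalization.OreSet (Submonoid.powers δ) :=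
    { ore_right_cancel := by
        rintro m m' ⟨_, k, rfl⟩ h
        exact ⟨1, by rw [hreg.right.pow k h]⟩
      oreNum := fun m s => (hcomm m s).choose
      oreDenom := fun _ s => s
      ore_eq := fun m s => (hcomm m s).choose_spec }
  have hunit := OreLocalization.numerator_isUnit (⟨δ, Submonoid.mem_powers δ⟩ : Submonoid.powers δ)
  refine ⟨_, inferInstance, OreLocalization.numeratorHom, fun m m' h => ?_, hunit⟩
  obtain ⟨⟨_, k, rfl⟩, v, hnum, hden⟩ := OreLocalization.oreDiv_eq_iff.1 h
  simp only [OneMemClass.coe_one, mul_one] at hden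
  rw [← hden] at hnum
  exact (hreg.left.pow k hnum).symm

section PositiveMonoid

variable {cs : CoxeterSystem M W} {γ : W}

/-- The interval `[1,γ]` for the reflection order. -/
abbrev NCInterval (cs : CoxeterSystem M W) (γ : W) : Type _ := {w : W // rle cs w γ}

@[simp]
theorem pgen_one : pgen cs γ 1 = 1 := by simp [pgen]

theorem pgen_coe (w : NCGen cs γ) : pgen cs γ w = PresentedMonoid.of (posRels cs γ) w :=
  dif_pos w.2

theorem pgen_mul_pgen_inv_mul {u v : W} (huv : rle cs u v) (hv : rle cs v γ) :
    pgen cs γ u * pgen cs γ (u⁻¹ * v) = pgen cs γ v := by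
  by_cases hu1 : u = 1
  · simp [hu1]
  by_cases huv1 : u⁻¹ * v = 1
  · rw [huv1, inv_mul_eq_one.1 huv1, pgen_one, mul_one]
  have hv1 : v ≠ 1 := by
    rintro rfl
    exact hu1 (huv.antisymm (one_rle u))
  rw [pgen, pgen, pgen, dif_pos ⟨hu1, huv.trans hv⟩, dif_pos ⟨huv1, huv.inv_mul.trans hv⟩,
    dif_pos ⟨hv1, hv⟩]
  exact PresentedMonoid.mk_eq_mk_of_rel ⟨_, _, _, rfl, rfl, mul_inv_cancel_left u v, huv.symm⟩

theorem pgen_mul_inv_mul_pgen {u v : W} (huv : rle cs u v) (hv : rle cs v γ) :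
    pgen cs γ (v * u⁻¹) * pgen cs γ u = pgen cs γ v := by
  simpa using pgen_mul_pgen_inv_mul huv.mul_inv hv

theorem pgen_inv_mul_mul_pgen_inv_mul {u v w : W} (huv : rle cs u v) (hvw : rle cs v w)
    (hw : rle cs w γ) : pgen cs γ (u⁻¹ * v) * pgen cs γ (v⁻¹ * w) = pgen cs γ (u⁻¹ * w) := by
  have h := pgen_mul_pgen_inv_mul (huv.inv_mul_of_rle hvw) ((huv.trans hvw).inv_mul.trans hw)
  rwa [show (u⁻¹ * v)⁻¹ * (u⁻¹ * w) = v⁻¹ * w by group] at h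

theorem posMonoid_induction {p : PosMonoid cs γ → Prop} (one : p 1)
    (mul : ∀ w, rle cs w γ → ∀ m, p m → p (pgen cs γ w * m)) (m : PosMonoid cs γ) : p m := by
  have hm : m ∈ Submonoid.closure (Set.range (PresentedMonoid.of (posRels cs γ))) := by
    simp [PresentedMonoid.closure_range_of]
  induction hm using Submonoid.closure_induction_left with
  | one => exact one
  | mul_left x hx y _ hy =>
    obtain ⟨w, rfl⟩ := hx
    rw [← pgen_coe]
    exact mul _ w.2.2 _ hy

/-- The homomorphism out of the positive monoid with prescribed values on the interval `[1,γ]`. -/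
def posLift {N : Type*} [Monoid N] (f : NCInterval cs γ → N)
    (hf : ∀ p q r : NCInterval cs γ, (p : W) * q = r → rle cs p r → f p * f q = f r) :
    PosMonoid cs γ →* N :=
  PresentedMonoid.lift (rels := posRels cs γ) (fun w => f ⟨w.1, w.2.2⟩) (by
    rintro _ _ ⟨u, v, w, rfl, rfl, hmul, hlen⟩
    have huw : rle cs u.1 w.1 := by
      rw [rle, ← hmul, inv_mul_cancel_left, hmul, hlen]
    simpa using hf ⟨u, u.2.2⟩ ⟨v, v.2.2⟩ ⟨w, w.2.2⟩ hmul huw)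

theorem posLift_pgen {N : Type*} [Monoid N] {f : NCInterval cs γ → N}
    (hf : ∀ p q r : NCInterval cs γ, (p : W) * q = r → rle cs p r → f p * f q = f r)
    (hone : f ⟨1, one_rle γ⟩ = 1) (w : NCInterval cs γ) :
    posLift f hf (pgen cs γ w) = f w := by
  obtain ⟨w, hw⟩ := w
  by_cases h1 : w = 1
  · subst h1
    rw [pgen_one, map_one, hone]
  · rw [pgen, dif_pos ⟨h1, hw⟩]
    rfl

theorem exists_comp_canHom_eq {N : Type*} [Monoid N] (ι : PosMonoid cs γ →* N)
    (hι : ∀ w : NCGen cs γ, IsUnit (ι (PresentedMonoid.of _ w))) :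
    ∃ φ : PosetGroup cs γ →* N, φ.comp (canHom cs γ) = ι := by
  have hrel : ∀ r ∈ posetGroupRels cs γ, FreeGroup.lift (fun w => (hι w).unit) r = 1 := by
    rintro _ ⟨u, v, w, rfl, hmul, hlen⟩
    simp only [map_mul, map_inv, FreeGroup.lift_apply_of, mul_inv_eq_one]
    refine Units.ext ?_
    simp only [Units.val_mul, IsUnit.unit_spec, ← map_mul]
    exact congrArg ι (PresentedMonoid.mk_eq_mk_of_rel ⟨u, v, w, rfl, rfl, hmul, hlen⟩)
  refine ⟨(Units.coeHom N).comp (PresentedGroup.toGroup hrel), PresentedMonoid.ext _ fun w => ?_⟩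
  change Units.val (PresentedGroup.toGroup hrel (PresentedGroup.of w)) = _
  rw [PresentedGroup.toGroup.of, IsUnit.unit_spec]

theorem isUnit_map_pgen {N : Type*} [Monoid N] {ι : PosMonoid cs γ →* N}
    (hι : IsUnit (ι (pgen cs γ γ))) {w : W} (hw : rle cs w γ) : IsUnit (ι (pgen cs γ w)) := by
  obtain ⟨d, hd⟩ := hι
  have hright : ι (pgen cs γ w) * ι (pgen cs γ (w⁻¹ * γ)) = d := by
    rw [hd, ← map_mul, pgen_mul_pgen_inv_mul hw (rle_refl γ)]
  have hleft : ι (pgen cs γ (γ * w⁻¹)) * ι (pgen cs γ w) = d := by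
    rw [hd, ← map_mul, pgen_mul_inv_mul_pgen hw (rle_refl γ)]
  rw [isUnit_iff_exists_and_exists]
  exact ⟨⟨ι (pgen cs γ (w⁻¹ * γ)) * ↑d⁻¹, by rw [← mul_assoc, hright, Units.mul_inv]⟩,
    ⟨↑d⁻¹ * ι (pgen cs γ (γ * w⁻¹)), by rw [mul_assoc, hleft, Units.inv_mul]⟩⟩

/-- The endomorphism of the positive monoid induced by conjugation by an element commuting
with `γ`. -/
noncomputable def conjHom (g : W) (hg : g * γ * g⁻¹ = γ) : PosMonoid cs γ →* PosMonoid cs γ :=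
  posLift (fun w => pgen cs γ (g * w * g⁻¹)) fun p q r hpq hpr => by
    have h := pgen_mul_pgen_inv_mul (hpr.conj g) (hg ▸ r.2.conj g)
    rwa [← hpq, show (g * p * g⁻¹)⁻¹ * (g * (p * q) * g⁻¹) = g * q * g⁻¹ by group, hpq] at h

theorem conjHom_pgen {g : W} (hg : g * γ * g⁻¹ = γ) {w : W} (hw : rle cs w γ) :
    conjHom g hg (pgen cs γ w) = pgen cs γ (g * w * g⁻¹) :=
  posLift_pgen _ (by simp) ⟨w, hw⟩

theorem conjHom_conjHom_inv (m : PosMonoid cs γ) :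
    conjHom γ (mul_inv_cancel_right γ γ) (conjHom γ⁻¹ (by group) m) = m := by
  induction m using posMonoid_induction with
  | one => simp
  | mul w hw m ih =>
    have hw' : rle cs (γ⁻¹ * w * γ⁻¹⁻¹) γ := by simpa using hw.conj γ⁻¹
    rw [map_mul, map_mul, ih, conjHom_pgen _ hw, conjHom_pgen _ hw']
    congr 2
    group

theorem pgen_self_mul (m : PosMonoid cs γ) :
    pgen cs γ γ * m = conjHom γ (mul_inv_cancel_right γ γ) m * pgen cs γ γ := by
  induction m using posMonoid_induction with
  | one => rw [map_one, one_mul, mul_one]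
  | mul w hw m ih =>
    have hswap : pgen cs γ γ * pgen cs γ w = pgen cs γ (γ * w * γ⁻¹) * pgen cs γ γ := by
      have hconj : rle cs (γ * w * γ⁻¹) γ := by simpa using hw.conj γ
      have h := pgen_mul_pgen_inv_mul hconj (rle_refl γ)
      rw [show (γ * w * γ⁻¹)⁻¹ * γ = γ * w⁻¹ by group] at h
      nth_rewrite 1 [← h]
      rw [mul_assoc, pgen_mul_inv_mul_pgen hw (rle_refl γ)]
    rw [map_mul, conjHom_pgen _ hw, ← mul_assoc, hswap, mul_assoc _ _ m, ih, ← mul_assoc]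

end PositiveMonoid

section Garside

variable {cs : CoxeterSystem M W} {γ : W} (hm : HasMeets cs γ)

/-- The largest left factor of `h` that can be multiplied onto `p` inside `[1,γ]`: the meet of
`p⁻¹γ` and `h`. -/
noncomputable def absorbed (p h : NCInterval cs γ) : W := (hm p.2.inv_mul h.2).choose

theorem isMeet_absorbed (p h : NCInterval cs γ) :
    IsMeet cs ((p : W)⁻¹ * γ) h (absorbed hm p h) :=
  (hm p.2.inv_mul h.2).choose_spec

theorem absorbed_one (h : NCInterval cs γ) : absorbed hm ⟨1, one_rle γ⟩ h = h := by
  have hmeet := isMeet_absorbed hm ⟨1, one_rle γ⟩ h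
  simp only [inv_one, one_mul] at hmeet
  exact hmeet.right.antisymm (hmeet.greatest h.2 (rle_refl _))

theorem absorbed_self (h : NCInterval cs γ) : absorbed hm ⟨γ, rle_refl γ⟩ h = 1 := by
  have hleft := (isMeet_absorbed hm ⟨γ, rle_refl γ⟩ h).left
  rw [inv_mul_cancel] at hleft
  exact hleft.antisymm (one_rle _)

theorem rle_mul_absorbed (p h : NCInterval cs γ) : rle cs p (p * absorbed hm p h) :=
  p.2.rle_mul (isMeet_absorbed hm p h).left

theorem mul_absorbed_rle (p h : NCInterval cs γ) : rle cs (p * absorbed hm p h) γ :=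
  p.2.mul_rle (isMeet_absorbed hm p h).left

section

variable {p q r : NCInterval cs γ} (hpq : (p : W) * q = r) (hpr : rle cs (p : W) r)

include hpq hpr

theorem rle_inv_mul_of_mul_eq : rle cs (q : W) ((p : W)⁻¹ * γ) := by
  have h := hpr.inv_mul_of_rle r.2
  rwa [← hpq, inv_mul_cancel_left] at h

theorem isMeet_absorbed_absorbed (h : NCInterval cs γ) :
    IsMeet cs ((q : W)⁻¹ * ((p : W)⁻¹ * γ)) (absorbed hm q h) (absorbed hm r h) := by
  have hmeet := isMeet_absorbed hm r h
  rw [← hpq, mul_inv_rev, mul_assoc] at hmeet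
  exact (isMeet_absorbed hm q h).of_rle_left
    ((rle_inv_mul_of_mul_eq hpq hpr).inv_mul_of_rle p.2.inv_mul) hmeet

theorem absorbed_mul (h : NCInterval cs γ) :
    absorbed hm p ⟨q * absorbed hm q h, mul_absorbed_rle hm q h⟩ = q * absorbed hm r h :=
  (isMeet_absorbed hm p ⟨_, mul_absorbed_rle hm q h⟩).eq_mul (rle_inv_mul_of_mul_eq hpq hpr)
    (rle_mul_absorbed hm q h) (isMeet_absorbed_absorbed hm hpq hpr h)

end

/-- Left multiplication by `⟨p⟩` on pairs `(h, m)`, thought of as the factorization `⟨h⟩ m` of an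
element of the positive monoid: as much of `h` as possible is absorbed into `p`. -/
noncomputable def absorb (p : NCInterval cs γ) :
    Function.End (NCInterval cs γ × PosMonoid cs γ) := fun x =>
  (⟨p * absorbed hm p x.1, mul_absorbed_rle hm p x.1⟩,
    pgen cs γ ((absorbed hm p x.1)⁻¹ * x.1) * x.2)

theorem absorb_one : absorb hm ⟨1, one_rle γ⟩ = 1 := by
  funext x
  simp [absorb, absorbed_one, Function.End.one_def]

theorem absorb_mul (p q r : NCInterval cs γ) (hpq : (p : W) * q = r) (hpr : rle cs (p : W) r) :
    absorb hm p * absorb hm q = absorb hm r := by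
  funext ⟨h, m⟩
  have hpqh := absorbed_mul hm hpq hpr h
  have hle := (isMeet_absorbed_absorbed hm hpq hpr h).right
  refine Prod.ext (Subtype.ext ?_) ?_
  · change (p : W) * absorbed hm p ⟨q * absorbed hm q h, _⟩ = r * absorbed hm r h
    rw [hpqh, ← mul_assoc, hpq]
  · change pgen cs γ ((absorbed hm p ⟨q * absorbed hm q h, _⟩)⁻¹ * (q * absorbed hm q h)) *
      (pgen cs γ ((absorbed hm q h)⁻¹ * h) * m) = pgen cs γ ((absorbed hm r h)⁻¹ * h) * m
    rw [hpqh, ← mul_assoc, show ((q : W) * absorbed hm r h)⁻¹ * (q * absorbed hm q h) =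
      (absorbed hm r h)⁻¹ * absorbed hm q h by group,
      pgen_inv_mul_mul_pgen_inv_mul hle (isMeet_absorbed hm q h).right h.2]

theorem pgen_absorb (p : NCInterval cs γ) (x : NCInterval cs γ × PosMonoid cs γ) :
    pgen cs γ (absorb hm p x).1 * (absorb hm p x).2 = pgen cs γ p * (pgen cs γ x.1 * x.2) := by
  have hp := pgen_mul_pgen_inv_mul (rle_mul_absorbed hm p x.1) (mul_absorbed_rle hm p x.1)
  rw [inv_mul_cancel_left] at hp
  simp only [absorb]
  rw [← hp, mul_assoc, ← mul_assoc (pgen cs γ (absorbed hm p x.1)),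
    pgen_mul_pgen_inv_mul (isMeet_absorbed hm p x.1).right x.1.2]

/-- The action of the positive monoid on factorizations given on generators by `absorb`. -/
noncomputable def act : PosMonoid cs γ →* Function.End (NCInterval cs γ × PosMonoid cs γ) :=
  posLift (absorb hm) (absorb_mul hm)

theorem act_pgen (w : NCInterval cs γ) : act hm (pgen cs γ w) = absorb hm w :=
  posLift_pgen _ (absorb_one hm) w

theorem act_pgen_mul (w : NCInterval cs γ) (m : PosMonoid cs γ)
    (x : NCInterval cs γ × PosMonoid cs γ) :
    act hm (pgen cs γ w * m) x = absorb hm w (act hm m x) := by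
  rw [map_mul, act_pgen]
  rfl

theorem pgen_act (m : PosMonoid cs γ) (x : NCInterval cs γ × PosMonoid cs γ) :
    pgen cs γ (act hm m x).1 * (act hm m x).2 = m * (pgen cs γ x.1 * x.2) := by
  induction m using posMonoid_induction with
  | one => rw [map_one, one_mul, Function.End.one_def, id]
  | mul w hw m ih =>
    rw [act_pgen_mul hm ⟨w, hw⟩, pgen_absorb, ih, mul_assoc]

include hm

/-- Acting by `⟨γ⟩` turns a factorization of `m` into the pair `(γ, m)`, from which `m` can be
read off. -/
theorem isLeftRegular_pgen_self : IsLeftRegular (pgen cs γ γ) := by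
  have hleft : Function.LeftInverse
      (fun m : PosMonoid cs γ => (act hm m (⟨1, one_rle γ⟩, 1)).2) (pgen cs γ γ * ·) := by
    intro m
    have h := pgen_act hm m (⟨1, one_rle γ⟩, 1)
    rw [pgen_one, mul_one, mul_one] at h
    simpa [act_pgen_mul hm ⟨γ, rle_refl γ⟩, absorb, absorbed_self] using h
  exact hleft.injective

theorem isRightRegular_pgen_self : IsRightRegular (pgen cs γ γ) := by
  intro m m' h
  simp only at h
  rw [← conjHom_conjHom_inv m, ← conjHom_conjHom_inv m', ← pgen_self_mul, ← pgen_self_mul] at h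
  rw [← conjHom_conjHom_inv m, isLeftRegular_pgen_self hm h, conjHom_conjHom_inv]

theorem canHom_injective_of_hasMeets : Function.Injective (canHom cs γ) := by
  obtain ⟨N, _, ι, hinj, hunit⟩ := exists_injective_isUnit_map
    ⟨isLeftRegular_pgen_self hm, isRightRegular_pgen_self hm⟩ fun m => ⟨_, pgen_self_mul m⟩
  obtain ⟨φ, rfl⟩ := exists_comp_canHom_eq ι fun w => by
    rw [← pgen_coe]
    exact isUnit_map_pgen hunit w.2.2
  exact .of_comp hinj

end Garside

/-! ### The geometric representation -/

section AlternatingWord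

variable (cs : CoxeterSystem M W)

theorem exists_eq_mul_wordProd_alternatingWord {w : W} {i : B} (hi : ¬ cs.IsRightDescent w i)
    (j : B) : ∃ v k, w = v * cs.wordProd (CoxeterSystem.alternatingWord i j k) ∧
      cs.length v + k = cs.length w ∧ ¬ cs.IsRightDescent v i ∧ ¬ cs.IsRightDescent v j := by
  induction hn : cs.length w generalizing w i j with
  | zero =>
    exact ⟨w, 0, by simp [CoxeterSystem.alternatingWord], hn, hi,
      by simp [cs.length_eq_zero_iff.mp hn, cs.not_isRightDescent_one]⟩
  | succ n ih =>
    by_cases hj : cs.IsRightDescent w j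
    · have hlen := cs.isRightDescent_iff.mp hj
      obtain ⟨v, k, hw, hk, hvj, hvi⟩ := ih (cs.isRightDescent_iff_not_isRightDescent_mul.mp hj) i
        (by lia)
      refine ⟨v, k + 1, ?_, by lia, hvi, hvj⟩
      rw [CoxeterSystem.alternatingWord_succ, cs.wordProd_concat, ← mul_assoc, ← hw,
        cs.simple_mul_simple_cancel_right]
    · exact ⟨w, 0, by simp [CoxeterSystem.alternatingWord], hn, hi, hj⟩

theorem coxeterMatrix_eq_zero_or_succ_le {v : W} {i j : B} {k : ℕ}
    (hlen : cs.length (v * cs.wordProd (CoxeterSystem.alternatingWord i j k)) = cs.length v + k)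
    (hi : ¬ cs.IsRightDescent (v * cs.wordProd (CoxeterSystem.alternatingWord i j k)) i) :
    M i j = 0 ∨ k + 1 ≤ M i j := by
  rw [or_iff_not_imp_left, ← not_lt]
  intro hM hk
  rw [M.symmetric] at hM hk
  refine cs.not_isReduced_alternatingWord j i hM hk ?_
  have hup := cs.not_isRightDescent_iff.mp hi
  rw [mul_assoc, ← cs.wordProd_concat, ← CoxeterSystem.alternatingWord_succ, hlen] at hup
  have := cs.length_mul_le v (cs.wordProd (CoxeterSystem.alternatingWord j i (k + 1)))
  have := cs.length_wordProd_le (CoxeterSystem.alternatingWord j i (k + 1))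
  rw [CoxeterSystem.length_alternatingWord] at this
  rw [CoxeterSystem.IsReduced, CoxeterSystem.length_alternatingWord]
  lia

end AlternatingWord

section GeometricRepresentation

open Polynomial Polynomial.Chebyshev

/-- The simple root `αᵢ` of the geometric representation on `B → ℝ`. -/
def simpleRoot [DecidableEq B] (i : B) : B → ℝ := Pi.single i 1

theorem simpleRoot_nonneg [DecidableEq B] (i : B) : 0 ≤ simpleRoot i :=
  Pi.single_nonneg.mpr zero_le_one

theorem simpleRoot_ne_zero [DecidableEq B] (i : B) : simpleRoot i ≠ 0 :=
  Pi.single_ne_zero_iff.mpr one_ne_zero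

theorem S_eval_eq_zero_of_mul_eq {n : ℕ} {φ : ℝ} (hφ : Real.sin φ ≠ 0) (h : n * φ = Real.pi) :
    (S ℝ (n - 1)).eval (2 * Real.cos φ) = 0 := by
  refine (mul_eq_zero.mp ?_).resolve_right hφ
  rw [S_two_mul_real_cos]
  push_cast
  rw [sub_add_cancel, h, Real.sin_pi]

theorem S_eval_add_S_eval_eq_zero_of_mul_eq {n : ℕ} {φ : ℝ} (hφ : Real.sin φ ≠ 0)
    (h : (2 * n + 1) * φ = 2 * Real.pi) :
    (S ℝ n).eval (2 * Real.cos φ) + (S ℝ (n - 1)).eval (2 * Real.cos φ) = 0 := by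
  refine (mul_eq_zero.mp ?_).resolve_right hφ
  rw [add_mul, S_two_mul_real_cos, S_two_mul_real_cos]
  push_cast
  rw [sub_add_cancel, show (n + 1 : ℝ) * φ = 2 * Real.pi - n * φ by linarith,
    Real.sin_two_pi_sub, neg_add_cancel]

theorem S_eval_two_mul_cos_pi_div_nonneg {m k : ℕ} (hm : m ≠ 1) (hk : m = 0 ∨ k ≤ m) :
    0 ≤ (S ℝ (k - 1)).eval (2 * Real.cos (Real.pi / m)) := by
  obtain rfl | hm0 := eq_or_ne m 0
  · simp
  have hm2 : (2 : ℝ) ≤ m := by exact_mod_cast (by lia : 2 ≤ m)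
  have hkm : (k : ℝ) ≤ m := by exact_mod_cast hk.resolve_left hm0
  have hsin : 0 < Real.sin (Real.pi / m) :=
    Real.sin_pos_of_pos_of_lt_pi (by positivity) (div_lt_self Real.pi_pos (by linarith))
  refine nonneg_of_mul_nonneg_left ?_ hsin
  rw [S_two_mul_real_cos]
  push_cast
  rw [sub_add_cancel]
  refine Real.sin_nonneg_of_nonneg_of_le_pi (by positivity) ?_
  rw [← mul_div_assoc, div_le_iff₀ (by linarith), mul_comm]
  gcongr

variable [Fintype B] [DecidableEq B]

variable (M) in
/-- The simple coroot `αᵢ^∨`, with `αᵢ^∨ (αⱼ) = -2 cos (π / M i j)`. The convention `π / 0 = 0`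
gives the standard value `-2` when `M i j = 0`, which encodes an infinite order. -/
noncomputable def simpleCoroot (i : B) : Module.Dual ℝ (B → ℝ) :=
  ∑ j, (-2 * Real.cos (Real.pi / M i j)) • LinearMap.proj j

@[simp]
theorem simpleCoroot_simpleRoot (i j : B) :
    simpleCoroot M i (simpleRoot j) = -2 * Real.cos (Real.pi / M i j) := by
  simp [simpleCoroot, simpleRoot, Pi.single_apply]

theorem simpleCoroot_simpleRoot_self (i : B) : simpleCoroot M i (simpleRoot i) = 2 := by
  simp

theorem reflection_mul_reflection_pow_eq_one_of_three_le {i j : B} (hm : 3 ≤ M i j) :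
    (Module.reflection (simpleCoroot_simpleRoot_self (M := M) i) *
      Module.reflection (simpleCoroot_simpleRoot_self (M := M) j)) ^ M i j = 1 := by
  have hm' : (3 : ℝ) ≤ M i j := by exact_mod_cast hm
  set φ := 2 * (Real.pi / M i j) with hφ
  have ht : 2 * Real.cos φ =
      simpleCoroot M i (simpleRoot j) * simpleCoroot M j (simpleRoot i) - 2 := by
    rw [simpleCoroot_simpleRoot, simpleCoroot_simpleRoot, M.symmetric j i, hφ, Real.cos_two_mul]
    ring
  have hsin : Real.sin φ ≠ 0 := by
    refine (Real.sin_pos_of_pos_of_lt_pi (by positivity) ?_).ne'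
    rw [hφ, ← mul_div_assoc, div_lt_iff₀ (by linarith)]
    nlinarith [Real.pi_pos]
  have hmφ : M i j * φ = 2 * Real.pi := by rw [hφ]; field_simp
  ext1 z
  rw [Module.reflection_mul_reflection_pow_apply _ _ _ _ _ ht]
  obtain ⟨n, hn | hn⟩ := Nat.even_or_odd' (M i j)
  · have hS := S_eval_eq_zero_of_mul_eq (n := n) hsin <| by
      rw [hn] at hmφ; push_cast at hmφ; linarith
    rw [show ((M i j : ℤ) - 2) / 2 = n - 1 by lia, show ((M i j : ℤ) - 1) / 2 = n - 1 by lia, hS]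
    simp
  · have hS := S_eval_add_S_eval_eq_zero_of_mul_eq (n := n) hsin (by exact_mod_cast hn ▸ hmφ)
    rw [show ((M i j : ℤ) - 2) / 2 = n - 1 by lia, show ((M i j : ℤ) - 1) / 2 = n by lia,
      show ((M i j : ℤ) - 3) / 2 = n - 1 by lia, show (M i j : ℤ) / 2 = n by lia, hS]
    simp

theorem isLiftable_reflection :
    M.IsLiftable fun i ↦ Module.reflection (simpleCoroot_simpleRoot_self (M := M) i) := by
  intro i j
  dsimp only
  obtain rfl | hij := eq_or_ne i j
  · rw [M.diagonal, pow_one]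
    exact LinearEquiv.ext (Module.involutive_reflection _)
  obtain hm | hm | hm | hm : M i j = 0 ∨ M i j = 1 ∨ M i j = 2 ∨ 3 ≤ M i j := by lia
  · rw [hm, pow_zero]
  · exact absurd hm (M.off_diagonal i j hij)
  · have hij' : simpleCoroot M i (simpleRoot j) = 0 := by simp [hm]
    have hji : simpleCoroot M j (simpleRoot i) = 0 := by simp [M.symmetric j i, hm]
    ext1 z
    simp only [hm, pow_two, LinearEquiv.mul_apply, Module.reflection_apply, map_sub, map_smul,
      simpleCoroot_simpleRoot_self, hij', hji, LinearEquiv.coe_one, id]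
    module
  · exact reflection_mul_reflection_pow_eq_one_of_three_le hm

/-- The geometric representation of `W` on `B → ℝ`. -/
noncomputable def geo (cs : CoxeterSystem M W) : Representation ℝ W (B → ℝ) :=
  (LinearEquiv.automorphismGroup.toLinearMapMonoidHom).comp (cs.lift ⟨_, isLiftable_reflection⟩)

variable (cs : CoxeterSystem M W)

theorem geo_simple (i : B) (x : B → ℝ) :
    geo cs (cs.simple i) x = x - simpleCoroot M i x • simpleRoot i := by
  simp [geo, Module.reflection_apply]

theorem geo_simple_simpleRoot_self (i : B) :
    geo cs (cs.simple i) (simpleRoot i) = -simpleRoot i := by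
  rw [geo_simple, simpleCoroot_simpleRoot_self, two_smul]
  abel

theorem geo_mul_apply (u w : W) (x : B → ℝ) : geo cs (u * w) x = geo cs u (geo cs w x) := by
  rw [map_mul, Module.End.mul_apply]

theorem geo_simple_simpleRoot (i j : B) :
    geo cs (cs.simple i) (simpleRoot j) =
      simpleRoot j + (2 * Real.cos (Real.pi / M i j)) • simpleRoot i := by
  rw [geo_simple, simpleCoroot_simpleRoot]
  module

theorem geo_wordProd_alternatingWord_simpleRoot (i j : B) (k : ℕ) :
    geo cs (cs.wordProd (CoxeterSystem.alternatingWord i j k)) (simpleRoot i) =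
      if Even k then
        (S ℝ k).eval (2 * Real.cos (Real.pi / M i j)) • simpleRoot i +
          (S ℝ (k - 1)).eval (2 * Real.cos (Real.pi / M i j)) • simpleRoot j
      else
        (S ℝ (k - 1)).eval (2 * Real.cos (Real.pi / M i j)) • simpleRoot i +
          (S ℝ k).eval (2 * Real.cos (Real.pi / M i j)) • simpleRoot j := by
  induction k with
  | zero => simp [CoxeterSystem.alternatingWord]
  | succ k ih =>
    have hS : (S ℝ ((k + 1 : ℕ) : ℤ)).eval (2 * Real.cos (Real.pi / M i j)) =
        2 * Real.cos (Real.pi / M i j) * (S ℝ k).eval (2 * Real.cos (Real.pi / M i j)) -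
          (S ℝ (k - 1)).eval (2 * Real.cos (Real.pi / M i j)) := by
      rw [Nat.cast_succ, S_add_one]
      simp
    rw [CoxeterSystem.alternatingWord_succ', cs.wordProd_cons, geo_mul_apply, ih, hS]
    obtain hk | hk := Nat.even_or_odd k
    · simp only [hk, if_true, Nat.even_add_one, not_true, if_false, map_add, map_smul,
        geo_simple_simpleRoot, M.symmetric j i, M.diagonal, Nat.cast_succ, Nat.cast_zero, zero_add,
        div_one, Real.cos_pi, add_sub_cancel_right]
      module
    · simp only [Nat.not_even_iff_odd.mpr hk, if_true, Nat.even_add_one, not_false_eq_true,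
        if_false, map_add, map_smul, geo_simple_simpleRoot, M.diagonal, Nat.cast_succ,
        Nat.cast_zero, zero_add, div_one, Real.cos_pi, add_sub_cancel_right]
      module

theorem exists_geo_wordProd_alternatingWord_simpleRoot_eq {i j : B} (hij : i ≠ j) {k : ℕ}
    (hk : M i j = 0 ∨ k + 1 ≤ M i j) : ∃ a b : ℝ, 0 ≤ a ∧ 0 ≤ b ∧
      geo cs (cs.wordProd (CoxeterSystem.alternatingWord i j k)) (simpleRoot i) =
        a • simpleRoot i + b • simpleRoot j := by
  have h₀ := S_eval_two_mul_cos_pi_div_nonneg (M.off_diagonal i j hij)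
    (hk.imp_right (Nat.le_of_succ_le ·))
  have h₁ := S_eval_two_mul_cos_pi_div_nonneg (M.off_diagonal i j hij) hk
  rw [Nat.cast_succ, add_sub_cancel_right] at h₁
  rw [geo_wordProd_alternatingWord_simpleRoot]
  split_ifs
  exacts [⟨_, _, h₁, h₀, rfl⟩, ⟨_, _, h₀, h₁, rfl⟩]

theorem geo_simpleRoot_nonneg {w : W} {i : B} (hi : ¬ cs.IsRightDescent w i) :
    0 ≤ geo cs w (simpleRoot i) := by
  induction hn : cs.length w using Nat.strong_induction_on generalizing w i with
  | _ n ih =>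
    obtain rfl | hw := eq_or_ne w 1
    · simpa using simpleRoot_nonneg i
    obtain ⟨j, hj⟩ := cs.exists_rightDescent_of_ne_one hw
    have hij : i ≠ j := by rintro rfl; exact hi hj
    obtain ⟨v, k, rfl, hk, hvi, hvj⟩ := exists_eq_mul_wordProd_alternatingWord cs hi j
    have hkM := coxeterMatrix_eq_zero_or_succ_le cs hk.symm hi
    obtain ⟨a, b, ha, hb, hab⟩ := exists_geo_wordProd_alternatingWord_simpleRoot_eq cs hij hkM
    have hv : cs.length v < n := by
      rcases k with _ | k
      · exact absurd (by simpa [CoxeterSystem.alternatingWord] using hj) hvj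
      · lia
    rw [geo_mul_apply, hab, map_add, map_smul, map_smul]
    exact add_nonneg (smul_nonneg ha (ih _ hv hvi rfl)) (smul_nonneg hb (ih _ hv hvj rfl))

theorem geo_simpleRoot_nonpos {w : W} {i : B} (hi : cs.IsRightDescent w i) :
    geo cs w (simpleRoot i) ≤ 0 := by
  have h := geo_simpleRoot_nonneg cs (cs.isRightDescent_iff_not_isRightDescent_mul.mp hi)
  rwa [geo_mul_apply, geo_simple_simpleRoot_self, map_neg, Left.nonneg_neg_iff] at h

end GeometricRepresentation

/-! ### Moved spaces -/

section MovedSpace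

variable {k G V : Type*} [Group G]

section Basic

variable [CommRing k] [AddCommGroup V] [Module k V] (ρ : Representation k G V) {g : G} {x : V}

/-- The moved space `im (1 - g)` of a group element `g` in a representation. -/
def movedSpace (g : G) : Submodule k V := LinearMap.range (1 - ρ g)

theorem sub_mem_movedSpace (g : G) (x : V) : x - ρ g x ∈ movedSpace ρ g := ⟨x, rfl⟩

@[simp]
theorem movedSpace_one : movedSpace ρ (1 : G) = ⊥ := by
  rw [movedSpace, map_one, sub_self, LinearMap.range_zero]

theorem movedSpace_mul_le (g h : G) :
    movedSpace ρ (g * h) ≤ movedSpace ρ g ⊔ movedSpace ρ h := by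
  rintro _ ⟨x, rfl⟩
  rw [LinearMap.sub_apply, Module.End.one_apply, map_mul, Module.End.mul_apply,
    ← sub_add_sub_cancel' (ρ h x) (ρ g (ρ h x)) x]
  exact Submodule.add_mem_sup (sub_mem_movedSpace ρ g (ρ h x)) (sub_mem_movedSpace ρ h x)

theorem apply_mem_movedSpace_conj (h : G) (hx : x ∈ movedSpace ρ g) :
    ρ h x ∈ movedSpace ρ (h * g * h⁻¹) := by
  obtain ⟨y, rfl⟩ := hx
  exact ⟨ρ h y, by simp⟩

theorem movedSpace_inv (g : G) : movedSpace ρ g⁻¹ = movedSpace ρ g := by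
  have hle (g : G) : movedSpace ρ g⁻¹ ≤ movedSpace ρ g := by
    rintro _ ⟨x, rfl⟩
    exact ⟨-ρ g⁻¹ x, by simp [neg_add_eq_sub]⟩
  exact le_antisymm (hle g) (by simpa using hle g⁻¹)

theorem apply_sum_pow_apply (g : G) (x : V) :
    ρ g (∑ k ∈ Finset.range (orderOf g), ρ (g ^ k) x) =
      ∑ k ∈ Finset.range (orderOf g), ρ (g ^ k) x := by
  have h := Finset.sum_range_succ' (fun k => ρ (g ^ k) x) (orderOf g)
  rw [Finset.sum_range_succ, pow_orderOf_eq_one, pow_zero, add_left_inj] at h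
  simpa only [map_sum, ← Module.End.mul_apply, ← map_mul, ← pow_succ'] using h.symm

variable {ρ} in
theorem mem_ker_one_sub : x ∈ LinearMap.ker (1 - ρ g) ↔ ρ g x = x := by
  rw [LinearMap.mem_ker, LinearMap.sub_apply, Module.End.one_apply, sub_eq_zero, eq_comm]

end Basic

theorem movedSpace_eq_orthogonal [Field k] [AddCommGroup V] [Module k V] [FiniteDimensional k V]
    {ρ : Representation k G V} {F : LinearMap.BilinForm k V} (hF : F.Nondegenerate) {g : G}
    (hg : ∀ x y, F (ρ g x) (ρ g y) = F x y) :
    movedSpace ρ g = F.orthogonal (LinearMap.ker (1 - ρ g)) := by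
  refine Submodule.eq_of_le_of_finrank_eq ?_ ?_
  · rintro _ ⟨y, rfl⟩ x hx
    have h := hg x y
    rw [mem_ker_one_sub.1 hx] at h
    simp [h]
  · rw [LinearMap.BilinForm.finrank_orthogonal hF]
    exact Nat.eq_sub_of_add_eq (LinearMap.finrank_range_add_finrank_ker _)

end MovedSpace

section AverageForm

variable {G ι : Type*} [Group G] [Finite G] [Fintype ι] (ρ : Representation ℝ G (ι → ℝ))

/-- The invariant inner product obtained by averaging the standard one over a finite group. -/
noncomputable def averageForm : LinearMap.BilinForm ℝ (ι → ℝ) :=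
  ∑ᶠ g, (dotProductBilin ℝ ℝ).compl₁₂ (ρ g) (ρ g)

omit [Finite G] in
theorem averageForm_apply [Fintype G] (x y : ι → ℝ) :
    averageForm ρ x y = ∑ g, ρ g x ⬝ᵥ ρ g y := by
  simp [averageForm, finsum_eq_sum_of_fintype]

theorem averageForm_comm (x y : ι → ℝ) : averageForm ρ x y = averageForm ρ y x := by
  cases nonempty_fintype G
  simp only [averageForm_apply, dotProduct_comm]

@[simp]
theorem averageForm_apply_apply (g : G) (x y : ι → ℝ) :
    averageForm ρ (ρ g x) (ρ g y) = averageForm ρ x y := by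
  cases nonempty_fintype G
  simp only [averageForm_apply, ← Module.End.mul_apply, ← map_mul]
  exact Fintype.sum_equiv (Equiv.mulRight g) _ _ fun _ => rfl

theorem averageForm_apply_left (g : G) (x y : ι → ℝ) :
    averageForm ρ (ρ g x) y = averageForm ρ x (ρ g⁻¹ y) := by
  rw [← averageForm_apply_apply ρ g x, Representation.self_inv_apply]

theorem averageForm_self_pos {x : ι → ℝ} (hx : x ≠ 0) : 0 < averageForm ρ x x := by
  cases nonempty_fintype G
  have dotProduct_self_nonneg (y : ι → ℝ) : 0 ≤ y ⬝ᵥ y :=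
    Finset.sum_nonneg fun i _ => mul_self_nonneg (y i)
  rw [averageForm_apply]
  refine Finset.sum_pos' (fun g _ => dotProduct_self_nonneg _) ⟨1, Finset.mem_univ _, ?_⟩
  rw [map_one, Module.End.one_apply]
  exact (dotProduct_self_nonneg x).lt_of_ne' (dotProduct_self_eq_zero.not.2 hx)

theorem averageForm_nondegenerate : (averageForm ρ).Nondegenerate := by
  refine ⟨fun x hx => ?_, fun x hx => ?_⟩ <;>
  · by_contra hx₀
    exact (averageForm_self_pos ρ hx₀).ne' (hx x)

theorem movedSpace_eq_averageForm_orthogonal (g : G) :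
    movedSpace ρ g = (averageForm ρ).orthogonal (LinearMap.ker (1 - ρ g)) :=
  movedSpace_eq_orthogonal (averageForm_nondegenerate ρ) (averageForm_apply_apply ρ g)

variable {ρ}

theorem averageForm_eq_zero {g : G} {x y : ι → ℝ} (hx : ρ g x = x) (hy : y ∈ movedSpace ρ g) :
    averageForm ρ x y = 0 := by
  rw [movedSpace_eq_averageForm_orthogonal] at hy
  exact hy x (mem_ker_one_sub.2 hx)

theorem exists_averageForm_ne_zero {g : G} {y : ι → ℝ} (hy : y ∉ movedSpace ρ g) :
    ∃ x, ρ g x = x ∧ averageForm ρ x y ≠ 0 := by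
  contrapose! hy
  rw [movedSpace_eq_averageForm_orthogonal]
  exact fun x hx => hy x (mem_ker_one_sub.1 hx)

end AverageForm

theorem eq_zero_of_forall_pow_apply_nonneg {G ι : Type*} [Group G] [Finite G] [Finite ι]
    {ρ : Representation ℝ G (ι → ℝ)} {g : G} {x : ι → ℝ} (hx : x ∈ movedSpace ρ g)
    (hpos : ∀ k : ℕ, 0 ≤ ρ (g ^ k) x) : x = 0 := by
  cases nonempty_fintype ι
  have hmem : ∑ k ∈ Finset.range (orderOf g), ρ (g ^ k) x ∈ movedSpace ρ g :=
    sum_mem fun k _ => by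
      simpa [(Commute.self_pow g k).eq.symm] using apply_mem_movedSpace_conj ρ (g ^ k) hx
  -- The sum over the orbit is both fixed and moved by `g`.
  have hsum : ∑ k ∈ Finset.range (orderOf g), ρ (g ^ k) x = 0 := by
    by_contra h
    exact (averageForm_self_pos ρ h).ne' (averageForm_eq_zero (apply_sum_pow_apply ρ g x) hmem)
  rw [Finset.sum_eq_zero_iff_of_nonneg fun k _ => hpos k] at hsum
  simpa using hsum 0 (Finset.mem_range.2 (orderOf_pos g))

/-! ### Roots and Carter's lemma -/

section Roots

variable [Fintype B] [DecidableEq B] (cs : CoxeterSystem M W)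

/-- `β` is a root, i.e. a translate of a simple root, and `t` is the reflection in `β`. -/
def IsRootOf (t : W) (β : B → ℝ) : Prop :=
  ∃ w i, t = w * cs.simple i * w⁻¹ ∧ β = geo cs w (simpleRoot i)

theorem isRootOf_simpleRoot (i : B) : IsRootOf cs (cs.simple i) (simpleRoot i) :=
  ⟨1, i, by simp, by simp⟩

theorem finite_setOf_isRootOf [Finite W] : {β | ∃ t, IsRootOf cs t β}.Finite := by
  refine (Set.finite_range fun p : W × B => geo cs p.1 (simpleRoot p.2)).subset ?_
  rintro β ⟨t, w, i, -, rfl⟩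
  exact ⟨(w, i), rfl⟩

variable {cs} {t : W} {β : B → ℝ}

theorem exists_isRootOf (h : cs.IsReflection t) : ∃ β, IsRootOf cs t β := by
  obtain ⟨w, i, rfl⟩ := h
  exact ⟨_, w, i, rfl, rfl⟩

namespace IsRootOf

theorem isReflection (h : IsRootOf cs t β) : cs.IsReflection t := by
  obtain ⟨w, i, rfl, -⟩ := h
  exact ⟨w, i, rfl⟩

theorem inv (h : IsRootOf cs t β) : t⁻¹ = t := h.isReflection.inv

theorem mul_self_mul (h : IsRootOf cs t β) (w : W) : t * (t * w) = w := by
  rw [← mul_assoc, h.isReflection.mul_self, one_mul]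

theorem ne_zero (h : IsRootOf cs t β) : β ≠ 0 := by
  obtain ⟨w, i, -, rfl⟩ := h
  exact (map_ne_zero_iff _ ((geo cs).apply_bijective w).1).2 (simpleRoot_ne_zero i)

theorem conj (h : IsRootOf cs t β) (g : W) : IsRootOf cs (g * t * g⁻¹) (geo cs g β) := by
  obtain ⟨w, i, rfl, rfl⟩ := h
  exact ⟨g * w, i, by group, (geo_mul_apply cs _ _ _).symm⟩

theorem neg (h : IsRootOf cs t β) : IsRootOf cs t (-β) := by
  obtain ⟨w, i, rfl, rfl⟩ := h
  refine ⟨w * cs.simple i, i, by simp [mul_assoc], ?_⟩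
  rw [geo_mul_apply, geo_simple_simpleRoot_self, map_neg]

theorem nonneg_or_nonpos (h : IsRootOf cs t β) : 0 ≤ β ∨ β ≤ 0 := by
  obtain ⟨w, i, -, rfl⟩ := h
  by_cases hi : cs.IsRightDescent w i
  · exact Or.inr (geo_simpleRoot_nonpos cs hi)
  · exact Or.inl (geo_simpleRoot_nonneg cs hi)

end IsRootOf

variable [Finite W]

theorem two_mul_averageForm_simpleRoot (i : B) (x : B → ℝ) :
    2 * averageForm (geo cs) x (simpleRoot i) =
      simpleCoroot M i x * averageForm (geo cs) (simpleRoot i) (simpleRoot i) := by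
  have h := averageForm_apply_apply (geo cs) (cs.simple i) x (simpleRoot i)
  rw [geo_simple_simpleRoot_self, geo_simple, map_sub, map_smul, map_neg, LinearMap.sub_apply,
    LinearMap.smul_apply, smul_eq_mul] at h
  linarith

namespace IsRootOf

theorem geo_apply (h : IsRootOf cs t β) (x : B → ℝ) :
    geo cs t x = x - (2 * averageForm (geo cs) x β / averageForm (geo cs) β β) • β := by
  obtain ⟨w, i, rfl, rfl⟩ := h
  have hpos := averageForm_self_pos (geo cs) (simpleRoot_ne_zero i)
  have hx := two_mul_averageForm_simpleRoot (cs := cs) i (geo cs w⁻¹ x)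
  rw [averageForm_apply_left, inv_inv] at hx
  rw [averageForm_apply_apply, hx, mul_div_cancel_right₀ _ hpos.ne', geo_mul_apply, geo_mul_apply,
    geo_simple, map_sub, map_smul, Representation.self_inv_apply]

theorem geo_apply_self (h : IsRootOf cs t β) : geo cs t β = -β := by
  have hpos := averageForm_self_pos (geo cs) h.ne_zero
  rw [h.geo_apply, mul_div_cancel_right₀ _ hpos.ne']
  module

theorem movedSpace_mul_le (h : IsRootOf cs t β) (g : W) :
    movedSpace (geo cs) (t * g) ≤ movedSpace (geo cs) g ⊔ Submodule.span ℝ {β} := by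
  rintro _ ⟨x, rfl⟩
  rw [LinearMap.sub_apply, Module.End.one_apply, geo_mul_apply, h.geo_apply, ← sub_add]
  exact Submodule.add_mem_sup (sub_mem_movedSpace _ g x)
    (Submodule.smul_mem _ _ (Submodule.mem_span_singleton_self β))

theorem notMem_movedSpace_mul (h : IsRootOf cs t β) {g : W} (hg : β ∈ movedSpace (geo cs) g) :
    β ∉ movedSpace (geo cs) (t * g) := by
  intro htg
  obtain ⟨x, hx⟩ := hg
  have hgx : geo cs g x = x - β := by rw [← hx]; simp
  have hpos := averageForm_self_pos (geo cs) h.ne_zero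
  have hform : 2 * averageForm (geo cs) x β = averageForm (geo cs) β β := by
    have := averageForm_apply_apply (geo cs) g x x
    simp only [hgx, map_sub, LinearMap.sub_apply, averageForm_comm _ β x] at this
    linarith
  have hfix : geo cs (t * g) x = x := by
    rw [geo_mul_apply, hgx, map_sub, h.geo_apply_self, h.geo_apply, hform, div_self hpos.ne']
    module
  linarith [averageForm_eq_zero hfix htg]

theorem mem_movedSpace_mul (h : IsRootOf cs t β) {g : W} (hg : β ∉ movedSpace (geo cs) g) :
    β ∈ movedSpace (geo cs) (t * g) := by
  obtain ⟨x, hx, hxβ⟩ := exists_averageForm_ne_zero hg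
  have hpos := averageForm_self_pos (geo cs) h.ne_zero
  have hmem := sub_mem_movedSpace (geo cs) (t * g) x
  rw [geo_mul_apply, hx, h.geo_apply, sub_sub_cancel] at hmem
  exact (Submodule.smul_mem_iff _ (div_ne_zero (mul_ne_zero two_ne_zero hxβ) hpos.ne')).1 hmem

theorem movedSpace_eq_sup_span (h : IsRootOf cs t β) {g : W} (hg : β ∈ movedSpace (geo cs) g) :
    movedSpace (geo cs) g = movedSpace (geo cs) (t * g) ⊔ Submodule.span ℝ {β} := by
  have hβ : Submodule.span ℝ {β} ≤ movedSpace (geo cs) g :=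
    (Submodule.span_singleton_le_iff_mem _ _).2 hg
  refine le_antisymm ?_ (sup_le ((h.movedSpace_mul_le g).trans (sup_le le_rfl hβ)) hβ)
  simpa only [h.mul_self_mul] using h.movedSpace_mul_le (t * g)

theorem finrank_movedSpace (h : IsRootOf cs t β) {g : W} (hg : β ∈ movedSpace (geo cs) g) :
    Module.finrank ℝ (movedSpace (geo cs) g) =
      Module.finrank ℝ (movedSpace (geo cs) (t * g)) + 1 := by
  rw [h.movedSpace_eq_sup_span hg,
    Submodule.finrank_sup_span_singleton (h.notMem_movedSpace_mul hg)]

end IsRootOf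

variable (cs)

theorem exists_forall_averageForm_simpleRoot_nonneg (x : B → ℝ) :
    ∃ g, ∀ i, 0 ≤ averageForm (geo cs) (geo cs g x) (simpleRoot i) := by
  obtain ⟨g, hg⟩ := Finite.exists_max fun g => ∑ b, geo cs g x b
  refine ⟨g, fun i => ?_⟩
  have hmax := hg (cs.simple i * g)
  have hpos := averageForm_self_pos (geo cs) (simpleRoot_ne_zero i)
  have hsum : ∑ b, simpleRoot i b = 1 := by simp [simpleRoot]
  simp only [geo_mul_apply, (isRootOf_simpleRoot cs i).geo_apply, Pi.sub_apply, Pi.smul_apply,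
    Finset.sum_sub_distrib, smul_eq_mul, ← Finset.mul_sum, hsum, mul_one] at hmax
  rw [sub_le_self_iff, le_div_iff₀ hpos, zero_mul] at hmax
  linarith

variable {cs}

theorem eq_one_of_geo_apply_eq_self {w : W} {y : B → ℝ} (hy : geo cs w y = y)
    (hpos : ∀ i, 0 < averageForm (geo cs) y (simpleRoot i)) : w = 1 := by
  by_contra hw
  obtain ⟨i, hi⟩ := cs.exists_rightDescent_of_ne_one hw
  set β := geo cs w (simpleRoot i) with hβ
  have hβ_eq : β = ∑ b, β b • simpleRoot b := by
    ext b
    simp [simpleRoot, Finset.sum_apply, Pi.single_apply]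
  have hnonpos : averageForm (geo cs) y β ≤ 0 := by
    rw [hβ_eq, map_sum]
    refine Finset.sum_nonpos fun b _ => ?_
    rw [map_smul, smul_eq_mul]
    exact mul_nonpos_of_nonpos_of_nonneg (geo_simpleRoot_nonpos cs hi b) (hpos b).le
  have heq : averageForm (geo cs) y β = averageForm (geo cs) y (simpleRoot i) := by
    rw [hβ, ← averageForm_apply_apply (geo cs) w y (simpleRoot i), hy]
  exact (hpos i).not_ge (heq ▸ hnonpos)

theorem exists_isRootOf_mem_movedSpace {w : W} (hw : w ≠ 1) :
    ∃ t β, IsRootOf cs t β ∧ β ∈ movedSpace (geo cs) w := by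
  by_contra! hcon
  -- Some vector fixed by `w` lies off every root hyperplane; a translate of it is strictly
  -- dominant and therefore has trivial stabilizer.
  have : Finite {β | ∃ t, IsRootOf cs t β} := finite_setOf_isRootOf cs
  obtain ⟨x, hxw, hx⟩ := Module.Dual.exists_forall_mem_ne_zero_of_forall_exists
    (LinearMap.ker (1 - geo cs w))
    (fun β : {β | ∃ t, IsRootOf cs t β} => (averageForm (geo cs)).flip β) <| by
      rintro ⟨β, t, hβ⟩
      obtain ⟨x, hx, hxβ⟩ := exists_averageForm_ne_zero (hcon t β hβ)
      exact ⟨x, mem_ker_one_sub.2 hx, hxβ⟩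
  obtain ⟨g, hg⟩ := exists_forall_averageForm_simpleRoot_nonneg cs x
  refine hw (conj_eq_one_iff.1 (eq_one_of_geo_apply_eq_self (w := g * w * g⁻¹) (y := geo cs g x)
    ?_ fun i => (hg i).lt_of_ne' ?_))
  · rw [geo_mul_apply, Representation.inv_self_apply, geo_mul_apply, mem_ker_one_sub.1 hxw]
  · rw [averageForm_apply_left]
    exact hx ⟨_, _, (isRootOf_simpleRoot cs i).conj g⁻¹⟩

theorem exists_reflections_length_eq_finrank (w : W) :
    ∃ l : List W, (∀ t ∈ l, cs.IsReflection t) ∧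
      l.length = Module.finrank ℝ (movedSpace (geo cs) w) ∧ l.prod = w := by
  induction hn : Module.finrank ℝ (movedSpace (geo cs) w) using Nat.strong_induction_on
    generalizing w with
  | _ n ih =>
    obtain rfl | hw := eq_or_ne w 1
    · exact ⟨[], by simp, by rw [← hn, movedSpace_one, finrank_bot, List.length_nil], rfl⟩
    obtain ⟨t, β, ht, hβ⟩ := exists_isRootOf_mem_movedSpace (cs := cs) hw
    have hrank := ht.finrank_movedSpace hβ
    obtain ⟨l, hl, hlen, hprod⟩ := ih _ (by lia) (t * w) rfl
    refine ⟨t :: l, by simpa using ⟨ht.isReflection, hl⟩, by rw [List.length_cons]; lia, ?_⟩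
    rw [List.prod_cons, hprod, ht.mul_self_mul]

theorem finrank_movedSpace_prod_le {l : List W} (hl : ∀ t ∈ l, cs.IsReflection t) :
    Module.finrank ℝ (movedSpace (geo cs) l.prod) ≤ l.length := by
  induction l with
  | nil => rw [List.prod_nil, movedSpace_one, finrank_bot, List.length_nil]
  | cons t l ih =>
    have hrank := ih fun s hs => hl s (List.mem_cons_of_mem _ hs)
    obtain ⟨β, hβ⟩ := exists_isRootOf (hl t List.mem_cons_self)
    rw [List.prod_cons, List.length_cons]
    by_cases h : β ∈ movedSpace (geo cs) l.prod
    · have := hβ.finrank_movedSpace h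
      lia
    · have := hβ.finrank_movedSpace (hβ.mem_movedSpace_mul h)
      rw [hβ.mul_self_mul] at this
      lia

theorem rlen_eq_finrank_movedSpace (w : W) :
    rlen cs w = Module.finrank ℝ (movedSpace (geo cs) w) := by
  apply le_antisymm
  · obtain ⟨l, hl, hlen, rfl⟩ := exists_reflections_length_eq_finrank (cs := cs) w
    exact hlen ▸ rlen_prod_le cs hl
  · obtain ⟨l, hl, hlen, rfl⟩ := exists_reflections_prod_eq cs w
    exact hlen ▸ finrank_movedSpace_prod_le hl

variable {u w : W}

theorem rle.movedSpace_le (h : rle cs u w) : movedSpace (geo cs) u ≤ movedSpace (geo cs) w := by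
  have hle := movedSpace_mul_le (geo cs) u (u⁻¹ * w)
  rw [mul_inv_cancel_left] at hle
  rw [Submodule.eq_of_le_of_finrank_le hle]
  · exact le_sup_left
  · rw [rle, rlen_eq_finrank_movedSpace, rlen_eq_finrank_movedSpace,
      rlen_eq_finrank_movedSpace] at h
    exact h ▸ Submodule.finrank_add_le_finrank_add_finrank _ _

namespace IsRootOf

theorem rlen_eq_rlen_mul_add_one (h : IsRootOf cs t β) (hu : β ∈ movedSpace (geo cs) u) :
    rlen cs u = rlen cs (t * u) + 1 := by
  rw [rlen_eq_finrank_movedSpace, rlen_eq_finrank_movedSpace, h.finrank_movedSpace hu]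

theorem rlen_eq_one (h : IsRootOf cs t β) : rlen cs t = 1 := by
  have hβ : β ∉ movedSpace (geo cs) (1 : W) := by simpa using h.ne_zero
  simpa [h.isReflection.mul_self, rlen_one] using
    h.rlen_eq_rlen_mul_add_one (h.mem_movedSpace_mul hβ)

theorem rle_of_mem_movedSpace (h : IsRootOf cs t β) (hu : β ∈ movedSpace (geo cs) u) :
    rle cs t u := by
  rw [rle, h.inv, h.rlen_eq_one, add_comm, h.rlen_eq_rlen_mul_add_one hu]

theorem mul_rle_mul (h : IsRootOf cs t β) (hu : β ∈ movedSpace (geo cs) u) (hw : rle cs u w) :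
    rle cs (t * u) (t * w) := by
  simpa only [h.inv] using (h.rle_of_mem_movedSpace hu).inv_mul_of_rle hw

theorem movedSpace_mul_eq_inf (h : IsRootOf cs t β) (hu : β ∈ movedSpace (geo cs) u)
    (hw : rle cs u w) :
    movedSpace (geo cs) (t * u) = movedSpace (geo cs) u ⊓ movedSpace (geo cs) (t * w) := by
  have hle : movedSpace (geo cs) (t * u) ≤ movedSpace (geo cs) u :=
    h.movedSpace_eq_sup_span hu ▸ le_sup_left
  refine Submodule.eq_of_le_of_finrank_le (le_inf hle (h.mul_rle_mul hu hw).movedSpace_le) ?_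
  have hlt : movedSpace (geo cs) u ⊓ movedSpace (geo cs) (t * w) < movedSpace (geo cs) u :=
    inf_le_left.lt_of_ne fun heq =>
      h.notMem_movedSpace_mul (hw.movedSpace_le hu) (inf_eq_left.1 heq hu)
  have := Submodule.finrank_lt_finrank_of_lt hlt
  have := h.finrank_movedSpace hu
  lia

end IsRootOf

theorem rle_of_movedSpace_le {γ : W} (hu : rle cs u γ) (hw : rle cs w γ)
    (h : movedSpace (geo cs) u ≤ movedSpace (geo cs) w) : rle cs u w := by
  induction hn : rlen cs u using Nat.strong_induction_on generalizing u w γ with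
  | _ n ih =>
    obtain rfl | hu1 := eq_or_ne u 1
    · exact one_rle w
    obtain ⟨t, β, ht, hβ⟩ := exists_isRootOf_mem_movedSpace (cs := cs) hu1
    have hle : movedSpace (geo cs) (t * u) ≤ movedSpace (geo cs) (t * w) := by
      rw [ht.movedSpace_mul_eq_inf hβ hu, ht.movedSpace_mul_eq_inf (h hβ) hw]
      exact inf_le_inf_right _ h
    have htu := ih _ (by have := ht.rlen_eq_rlen_mul_add_one hβ; lia) (ht.mul_rle_mul hβ hu)
      (ht.mul_rle_mul (h hβ) hw) hle rfl
    rw [← ht.mul_self_mul u]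
    exact (ht.rle_of_mem_movedSpace (h hβ)).mul_rle (by rwa [ht.inv])

end Roots

/-! ### Cones of positive roots -/

section Hull

variable {𝕜 E : Type*} [Field 𝕜] [LinearOrder 𝕜] [IsStrictOrderedRing 𝕜] [AddCommGroup E]
  [Module 𝕜 E] {S : Set E} {f : Module.Dual 𝕜 E}

theorem apply_nonneg_of_mem_hull (hf : ∀ y ∈ S, 0 ≤ f y) {x : E}
    (hx : x ∈ PointedCone.hull 𝕜 S) : 0 ≤ f x := by
  have hle : PointedCone.hull 𝕜 S ≤ (PointedCone.positive 𝕜 𝕜).comap f := Submodule.span_le.2 hf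
  exact hle hx

theorem mem_hull_setOf_apply_eq_zero (hf : ∀ y ∈ S, 0 ≤ f y) {x : E}
    (hx : x ∈ PointedCone.hull 𝕜 S) (hfx : f x = 0) :
    x ∈ PointedCone.hull 𝕜 {y ∈ S | f y = 0} := by
  induction hx using Submodule.span_induction with
  | mem x hx => exact PointedCone.subset_hull ⟨hx, hfx⟩
  | zero => exact zero_mem _
  | add x y hx hy ihx ihy =>
    rw [map_add, add_eq_zero_iff_of_nonneg (apply_nonneg_of_mem_hull hf hx)
      (apply_nonneg_of_mem_hull hf hy)] at hfx
    exact add_mem (ihx hfx.1) (ihy hfx.2)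
  | smul c x _ ihx =>
    rw [← Nonneg.coe_smul, map_smul, smul_eq_zero] at hfx
    obtain hc | hfx := hfx
    · rw [← Nonneg.coe_smul, hc, zero_smul]
      exact zero_mem _
    · exact Submodule.smul_mem _ c (ihx hfx)

variable (𝕜) in
theorem exists_irredundant_subset_hull (hS : S.Finite) :
    ∃ Δ ⊆ S, S ⊆ PointedCone.hull 𝕜 Δ ∧ ∀ δ ∈ Δ, δ ∉ PointedCone.hull 𝕜 (Δ \ {δ}) := by
  obtain ⟨Δ, ⟨hΔS, hSΔ⟩, hmin⟩ := (hS.finite_subsets.subset fun _ h => h.1 :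
    {Δ | Δ ⊆ S ∧ S ⊆ PointedCone.hull 𝕜 Δ}.Finite).exists_minimal
      ⟨S, subset_rfl, PointedCone.subset_hull⟩
  refine ⟨Δ, hΔS, hSΔ, fun δ hδ hδ' => ?_⟩
  have hle : PointedCone.hull 𝕜 Δ ≤ PointedCone.hull 𝕜 (Δ \ {δ}) := by
    refine Submodule.span_le.2 fun ε hε => ?_
    obtain rfl | hεδ := eq_or_ne ε δ
    · exact hδ'
    · exact PointedCone.subset_hull ⟨hε, hεδ⟩
  exact (hmin ⟨Set.sdiff_subset.trans hΔS, hSΔ.trans hle⟩ Set.sdiff_subset hδ).2 rfl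

theorem smul_sub_smul_notMem_hull (hf : ∀ y ∈ S, 0 < f y) {δ ε : E}
    (hδ : δ ∉ PointedCone.hull 𝕜 (S \ {δ})) (hδS : δ ∈ S) (hεS : ε ∈ S) (hne : ε ≠ δ) (c : 𝕜)
    {d : 𝕜} (hd : 0 < d) : c • δ - d • ε ∉ PointedCone.hull 𝕜 S := by
  intro h
  rw [← Set.insert_sdiff_self_of_mem hδS, PointedCone.hull, Submodule.mem_span_insert] at h
  obtain ⟨a, z, hz, h⟩ := h
  set v := d • ε + z with hv
  have hvS : v ∈ PointedCone.hull 𝕜 (S \ {δ}) :=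
    add_mem (PointedCone.smul_mem _ hd.le (PointedCone.subset_hull ⟨hεS, hne⟩)) hz
  have hvδ : v = (c - a) • δ := by
    rw [← Nonneg.coe_smul] at h
    rw [sub_eq_iff_eq_add] at h
    rw [hv, sub_smul, h]
    abel
  have hfz : 0 ≤ f z := apply_nonneg_of_mem_hull (fun y hy => (hf y hy.1).le) hz
  have hpos : 0 < (c - a) * f δ := by
    rw [← smul_eq_mul, ← map_smul, ← hvδ, hv, map_add, map_smul, smul_eq_mul]
    linarith [mul_pos hd (hf ε hεS)]
  have hca : 0 < c - a := pos_of_mul_pos_left hpos (hf δ hδS).le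
  have hδv : δ = (c - a)⁻¹ • v := by rw [hvδ, inv_smul_smul₀ hca.ne']
  have hmem := PointedCone.smul_mem _ (inv_nonneg.2 hca.le) hvS
  exact hδ (by rwa [← hδv] at hmem)

end Hull

section PosRoots

variable [Fintype B]

theorem sum_proj_pos {x : B → ℝ} (hx : 0 < x) :
    0 < (∑ b, LinearMap.proj b : Module.Dual ℝ (B → ℝ)) x := by
  simpa using Fintype.sum_pos hx

variable [DecidableEq B] (cs : CoxeterSystem M W)

/-- The positive roots in the moved space of `u`. -/
def posRoots (u : W) : Set (B → ℝ) :=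
  {β | (∃ t, IsRootOf cs t β) ∧ 0 ≤ β ∧ β ∈ movedSpace (geo cs) u}

/-- The convex cone spanned by the positive roots in the moved space of `u`. -/
noncomputable def rootCone (u : W) : PointedCone ℝ (B → ℝ) := PointedCone.hull ℝ (posRoots cs u)

variable {cs} {u w : W} {x : B → ℝ}

theorem nonneg_of_mem_rootCone (hx : x ∈ rootCone cs u) : 0 ≤ x := by
  have hle : rootCone cs u ≤ PointedCone.positive ℝ (B → ℝ) :=
    Submodule.span_le.2 fun β hβ => hβ.2.1
  exact hle hx

theorem mem_movedSpace_of_mem_rootCone (hx : x ∈ rootCone cs u) :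
    x ∈ movedSpace (geo cs) u := by
  have hle : rootCone cs u ≤ PointedCone.ofSubmodule (movedSpace (geo cs) u) :=
    Submodule.span_le.2 fun β hβ => hβ.2.2
  exact hle hx

theorem posRoots_mono (h : movedSpace (geo cs) u ≤ movedSpace (geo cs) w) :
    posRoots cs u ⊆ posRoots cs w :=
  fun _ hβ => ⟨hβ.1, hβ.2.1, h hβ.2.2⟩

theorem rootCone_mono (h : movedSpace (geo cs) u ≤ movedSpace (geo cs) w) :
    rootCone cs u ≤ rootCone cs w :=
  Submodule.span_mono (posRoots_mono h)

theorem pos_of_mem_posRoots (hx : x ∈ posRoots cs u) : 0 < x := by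
  obtain ⟨⟨t, ht⟩, hx₀, -⟩ := hx
  exact hx₀.lt_of_ne ht.ne_zero.symm

theorem simpleRoot_mem_posRoots {s : B} (hs : simpleRoot s ∈ movedSpace (geo cs) u) :
    simpleRoot s ∈ posRoots cs u :=
  ⟨⟨_, isRootOf_simpleRoot cs s⟩, simpleRoot_nonneg s, hs⟩

variable [Finite W]

theorem movedSpace_le_span_posRoots (u : W) :
    movedSpace (geo cs) u ≤ Submodule.span ℝ (posRoots cs u) := by
  induction hn : rlen cs u using Nat.strong_induction_on generalizing u with
  | _ n ih =>
    obtain rfl | hu := eq_or_ne u 1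
    · exact movedSpace_one (geo cs) ▸ bot_le
    obtain ⟨t, β, ht, hβ⟩ := exists_isRootOf_mem_movedSpace (cs := cs) hu
    have hsup := ht.movedSpace_eq_sup_span hβ
    have hlen := ht.rlen_eq_rlen_mul_add_one hβ
    have htu : movedSpace (geo cs) (t * u) ≤ Submodule.span ℝ (posRoots cs u) :=
      (ih _ (by lia) _ rfl).trans (Submodule.span_mono (posRoots_mono (hsup ▸ le_sup_left)))
    refine hsup.le.trans (sup_le htu ((Submodule.span_singleton_le_iff_mem _ _).2 ?_))
    obtain hpos | hneg := ht.nonneg_or_nonpos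
    · exact Submodule.subset_span ⟨⟨t, ht⟩, hpos, hβ⟩
    · rw [← neg_neg β]
      exact neg_mem (Submodule.subset_span ⟨⟨t, ht.neg⟩, neg_nonneg.2 hneg, neg_mem hβ⟩)

variable {Δ : Set (B → ℝ)}

theorem averageForm_nonpos_of_irredundant (hΔ : Δ ⊆ posRoots cs u)
    (hgen : posRoots cs u ⊆ PointedCone.hull ℝ Δ)
    (hirr : ∀ δ ∈ Δ, δ ∉ PointedCone.hull ℝ (Δ \ {δ})) {δ ε : B → ℝ} (hδ : δ ∈ Δ) (hε : ε ∈ Δ)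
    (hne : δ ≠ ε) : averageForm (geo cs) δ ε ≤ 0 := by
  by_contra! hpos
  obtain ⟨⟨t, ht⟩, -, hδu⟩ := hΔ hδ
  obtain ⟨⟨r, hr⟩, -, hεu⟩ := hΔ hε
  have hΔpos : ∀ y ∈ Δ, 0 < (∑ b, LinearMap.proj b : Module.Dual ℝ (B → ℝ)) y :=
    fun y hy => sum_proj_pos (pos_of_mem_posRoots (hΔ hy))
  set c := 2 * averageForm (geo cs) ε δ / averageForm (geo cs) δ δ with hc
  have hc₀ : 0 < c := by
    have := averageForm_self_pos (geo cs) ht.ne_zero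
    rw [hc, averageForm_comm _ ε]
    positivity
  have hroot := hr.conj t
  have hmem : ε - c • δ ∈ movedSpace (geo cs) u := sub_mem hεu (Submodule.smul_mem _ _ hδu)
  rw [ht.geo_apply] at hroot
  obtain h | h := hroot.nonneg_or_nonpos
  · refine smul_sub_smul_notMem_hull hΔpos (hirr ε hε) hε hδ hne 1 hc₀ ?_
    rw [one_smul]
    exact hgen ⟨⟨_, hroot⟩, h, hmem⟩
  · refine smul_sub_smul_notMem_hull hΔpos (hirr δ hδ) hδ hε hne.symm c one_pos ?_
    rw [one_smul, ← neg_sub]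
    exact hgen ⟨⟨_, hroot.neg⟩, neg_nonneg.2 h, neg_mem hmem⟩

variable (cs) in
theorem exists_linearIndepOn_posRoots_subset_hull (u : W) :
    ∃ Δ ⊆ posRoots cs u, posRoots cs u ⊆ PointedCone.hull ℝ Δ ∧ LinearIndepOn ℝ id Δ := by
  obtain ⟨Δ, hΔ, hgen, hirr⟩ := exists_irredundant_subset_hull ℝ <|
    (finite_setOf_isRootOf cs).subset fun β (hβ : β ∈ posRoots cs u) => hβ.1
  refine ⟨Δ, hΔ, hgen, LinearMap.BilinForm.linearIndependent_of_pairwise_le_zero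
    (averageForm (geo cs)) (fun x hx => averageForm_self_pos _ hx) (∑ b, LinearMap.proj b) _
    (fun δ => sum_proj_pos (pos_of_mem_posRoots (hΔ δ.2))) fun δ ε hne => ?_⟩
  exact averageForm_nonpos_of_irredundant hΔ hgen hirr δ.2 ε.2 (Subtype.coe_ne_coe.2 hne)

end PosRoots

section SimpleRootSplitting

variable [DecidableEq B] {s : B} {Δ : Set (B → ℝ)}

theorem exists_smul_simpleRoot_mem [Finite B] (hΔ : ∀ δ ∈ Δ, 0 < δ)
    (hs : simpleRoot s ∈ PointedCone.hull ℝ Δ) : ∃ c : ℝ, c ≠ 0 ∧ c • simpleRoot s ∈ Δ := by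
  cases nonempty_fintype B
  set f : Module.Dual ℝ (B → ℝ) := ∑ b ∈ Finset.univ.erase s, LinearMap.proj b
  have hf {x : B → ℝ} : f x = ∑ b ∈ Finset.univ.erase s, x b := by simp [f]
  have hfs : f (simpleRoot s) = 0 := by
    rw [hf]
    exact Finset.sum_eq_zero fun b hb => Pi.single_eq_of_ne (Finset.ne_of_mem_erase hb) _
  have hmem := mem_hull_setOf_apply_eq_zero
    (fun δ hδ => hf ▸ Finset.sum_nonneg fun b _ => (hΔ δ hδ).le b) hs hfs
  obtain ⟨δ, hδ, hfδ⟩ : {δ ∈ Δ | f δ = 0}.Nonempty := by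
    by_contra h
    rw [Set.not_nonempty_iff_eq_empty.1 h, PointedCone.hull, Submodule.span_empty] at hmem
    exact simpleRoot_ne_zero s hmem
  have hδs : δ = δ s • simpleRoot s := by
    rw [hf, Finset.sum_eq_zero_iff_of_nonneg fun b _ => (hΔ δ hδ).le b] at hfδ
    ext b
    obtain rfl | hb := eq_or_ne b s
    · simp [simpleRoot]
    · simp [simpleRoot, hb, hfδ b (by simpa using hb)]
  refine ⟨δ s, fun h => (hΔ δ hδ).ne' ?_, hδs ▸ hδ⟩
  rw [hδs, h, zero_smul]

variable [Fintype B] [Finite W] {cs : CoxeterSystem M W} {u : W}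

theorem mem_movedSpace_simple_mul (hs : simpleRoot s ∈ movedSpace (geo cs) u)
    (h₀ : ∀ x ∈ movedSpace (geo cs) (cs.simple s * u), x s = 0) {x : B → ℝ}
    (hx : x ∈ movedSpace (geo cs) u) (hxs : x s = 0) :
    x ∈ movedSpace (geo cs) (cs.simple s * u) := by
  rw [(isRootOf_simpleRoot cs s).movedSpace_eq_sup_span hs, Submodule.mem_sup] at hx
  obtain ⟨y, hy, z, hz, rfl⟩ := hx
  obtain ⟨c, rfl⟩ := Submodule.mem_span_singleton.1 hz
  have hc : c = 0 := by simpa [simpleRoot, h₀ y hy] using hxs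
  simpa [hc] using hy

theorem movedSpace_simple_mul_le_span (hs : simpleRoot s ∈ movedSpace (geo cs) u)
    (h₀ : ∀ x ∈ movedSpace (geo cs) (cs.simple s * u), x s = 0) (hΔ : ∀ δ ∈ Δ, 0 < δ)
    (hgen : posRoots cs u ⊆ PointedCone.hull ℝ Δ) :
    movedSpace (geo cs) (cs.simple s * u) ≤ Submodule.span ℝ {δ ∈ Δ | δ s = 0} := by
  have hle : movedSpace (geo cs) (cs.simple s * u) ≤ movedSpace (geo cs) u :=
    (isRootOf_simpleRoot cs s).movedSpace_eq_sup_span hs ▸ le_sup_left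
  refine (movedSpace_le_span_posRoots _).trans (Submodule.span_le.2 fun β hβ => ?_)
  have hβΔ : β ∈ PointedCone.hull ℝ {δ ∈ Δ | (LinearMap.proj s : Module.Dual ℝ (B → ℝ)) δ = 0} :=
    mem_hull_setOf_apply_eq_zero (fun δ hδ => (hΔ δ hδ).le s) (hgen (posRoots_mono hle hβ))
      (h₀ β hβ.2.2)
  exact PointedCone.hull_le_span ℝ _ hβΔ

theorem eq_smul_simpleRoot_or_apply_eq_zero (hs : simpleRoot s ∈ movedSpace (geo cs) u)
    (h₀ : ∀ x ∈ movedSpace (geo cs) (cs.simple s * u), x s = 0) (hΔ : Δ ⊆ posRoots cs u)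
    (hgen : posRoots cs u ⊆ PointedCone.hull ℝ Δ) (hind : LinearIndepOn ℝ id Δ) {δ : B → ℝ}
    (hδ : δ ∈ Δ) : (∃ c : ℝ, δ = c • simpleRoot s) ∨ δ s = 0 := by
  have hpos : ∀ δ ∈ Δ, 0 < δ := fun δ hδ => pos_of_mem_posRoots (hΔ hδ)
  obtain ⟨c, hc, hcΔ⟩ := exists_smul_simpleRoot_mem hpos (hgen (simpleRoot_mem_posRoots hs))
  by_contra! hcon
  obtain ⟨hδc, hδs⟩ := hcon
  have hle : movedSpace (geo cs) u ≤ Submodule.span ℝ (Δ \ {δ}) := by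
    rw [(isRootOf_simpleRoot cs s).movedSpace_eq_sup_span hs]
    refine sup_le ((movedSpace_simple_mul_le_span hs h₀ hpos hgen).trans
      (Submodule.span_mono fun ε hε => ⟨hε.1, ?_⟩)) ?_
    · rintro rfl
      exact hδs hε.2
    · rw [Submodule.span_singleton_le_iff_mem, ← Submodule.smul_mem_iff _ hc]
      exact Submodule.subset_span ⟨hcΔ, (hδc c).symm⟩
  exact hind.notMem_span hδ (by simpa using hle (hΔ hδ).2.2)

theorem sub_smul_simpleRoot_mem_rootCone (hs : simpleRoot s ∈ movedSpace (geo cs) u)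
    (h₀ : ∀ x ∈ movedSpace (geo cs) (cs.simple s * u), x s = 0) {x : B → ℝ}
    (hx : x ∈ rootCone cs u) : x - x s • simpleRoot s ∈ rootCone cs (cs.simple s * u) := by
  obtain ⟨Δ, hΔ, hgen, hind⟩ := exists_linearIndepOn_posRoots_subset_hull cs u
  let p : Module.End ℝ (B → ℝ) := 1 - (LinearMap.proj s).smulRight (simpleRoot s)
  have hle : PointedCone.hull ℝ Δ ≤ (rootCone cs (cs.simple s * u)).comap p := by
    refine Submodule.span_le.2 fun δ hδ => ?_
    change δ - δ s • simpleRoot s ∈ rootCone cs (cs.simple s * u)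
    obtain ⟨c, rfl⟩ | hδs := eq_smul_simpleRoot_or_apply_eq_zero hs h₀ hΔ hgen hind hδ
    · simp [simpleRoot]
    · obtain ⟨hroot, hpos, hδu⟩ := hΔ hδ
      rw [hδs, zero_smul, sub_zero]
      exact PointedCone.subset_hull ⟨hroot, hpos, mem_movedSpace_simple_mul hs h₀ hδu hδs⟩
  exact hle (Submodule.span_le.2 hgen hx)

end SimpleRootSplitting

/-! ### Meets below a Coxeter element -/

section Reflection

variable [DecidableEq B] [Fintype B] {cs : CoxeterSystem M W} {s : B} {t u : W} {x β : B → ℝ}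

theorem IsRootOf.geo_simple_nonneg (h : IsRootOf cs t β) (h₀ : 0 ≤ β)
    (hs : ∀ c : ℝ, β ≠ c • simpleRoot s) : 0 ≤ geo cs (cs.simple s) β := by
  refine (h.conj (cs.simple s)).nonneg_or_nonpos.resolve_right fun hneg => hs (β s) ?_
  ext b
  obtain rfl | hb := eq_or_ne b s
  · simp [simpleRoot]
  · have hb₀ : β b ≤ 0 := by simpa [geo_simple, simpleRoot, hb] using hneg b
    simp [simpleRoot, hb, hb₀.antisymm (h₀ b)]

theorem geo_simple_mem_rootCone (hs : simpleRoot s ∉ movedSpace (geo cs) u)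
    (hx : x ∈ rootCone cs u) :
    geo cs (cs.simple s) x ∈ rootCone cs (cs.simple s * u * (cs.simple s)⁻¹) := by
  have hle : rootCone cs u ≤ (rootCone cs (cs.simple s * u * (cs.simple s)⁻¹)).comap
      (geo cs (cs.simple s)) := by
    refine Submodule.span_le.2 ?_
    rintro β ⟨⟨t, ht⟩, hβ₀, hβ⟩
    refine PointedCone.subset_hull ⟨⟨_, ht.conj _⟩, ht.geo_simple_nonneg hβ₀ ?_,
      apply_mem_movedSpace_conj _ _ hβ⟩
    rintro c rfl
    have hc : c ≠ 0 := fun h => ht.ne_zero (by rw [h, zero_smul])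
    exact hs ((Submodule.smul_mem_iff _ hc).1 hβ)
  exact hle hx

theorem movedSpace_le_movedSpace_simple_conj (hs : simpleRoot s ∈ movedSpace (geo cs) u) :
    movedSpace (geo cs) u ≤ movedSpace (geo cs) (cs.simple s * u * (cs.simple s)⁻¹) := by
  intro x hx
  have hmem : geo cs (cs.simple s) x ∈ movedSpace (geo cs) u := by
    rw [geo_simple]
    exact sub_mem hx (Submodule.smul_mem _ _ hs)
  simpa [← geo_mul_apply] using apply_mem_movedSpace_conj _ (cs.simple s) hmem

variable [Finite W]

theorem apply_eq_zero_of_mem_movedSpace_wordProd {L : List B} (hL : s ∉ L)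
    (hx : x ∈ movedSpace (geo cs) (cs.wordProd L)) : x s = 0 := by
  induction L generalizing x with
  | nil => simp_all
  | cons i L ih =>
    rw [List.mem_cons, not_or] at hL
    rw [cs.wordProd_cons] at hx
    obtain ⟨y, hy, z, hz, rfl⟩ :=
      Submodule.mem_sup.1 ((isRootOf_simpleRoot cs i).movedSpace_mul_le _ hx)
    obtain ⟨c, rfl⟩ := Submodule.mem_span_singleton.1 hz
    simp [ih hL.2 hy, simpleRoot, hL.1]

theorem geo_simple_mem_rootCone_of_apply_nonneg (hs : simpleRoot s ∈ movedSpace (geo cs) u)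
    (h₀ : ∀ x ∈ movedSpace (geo cs) (cs.simple s * u), x s = 0) (hx : x ∈ rootCone cs u)
    (hxs : 0 ≤ geo cs (cs.simple s) x s) :
    geo cs (cs.simple s) x ∈ rootCone cs (cs.simple s * u * (cs.simple s)⁻¹) := by
  have hconj := movedSpace_le_movedSpace_simple_conj hs
  have hle : movedSpace (geo cs) (cs.simple s * u) ≤ movedSpace (geo cs) u :=
    (isRootOf_simpleRoot cs s).movedSpace_eq_sup_span hs ▸ le_sup_left
  have hsplit : geo cs (cs.simple s) x =
      (x - x s • simpleRoot s) + geo cs (cs.simple s) x s • simpleRoot s := by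
    simp [geo_simple, simpleRoot, sub_smul]
  rw [hsplit]
  exact add_mem (rootCone_mono (hle.trans hconj) (sub_smul_simpleRoot_mem_rootCone hs h₀ hx))
    (PointedCone.smul_mem _ hxs (PointedCone.subset_hull (simpleRoot_mem_posRoots (hconj hs))))

end Reflection

section Counterexample

variable [DecidableEq B] [Fintype B] (cs : CoxeterSystem M W)

/-- A counterexample, below `γ`, to the statement that a common point of the root cones of `u` and
`w` lies in the moved space of a common lower bound of `u` and `w`. -/
structure IsConeCounterexample (γ u w : W) (x : B → ℝ) : Prop where
  left_rle : rle cs u γ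
  right_rle : rle cs w γ
  mem_left : x ∈ rootCone cs u
  mem_right : x ∈ rootCone cs w
  notMem : ∀ ⦃v⦄, rle cs v u → rle cs v w → x ∉ movedSpace (geo cs) v

variable {cs} {γ u w : W} {x : B → ℝ} {s : B} {L : List B}

theorem rle.simple_mul_rle_wordProd [Finite W] (hu : rle cs u (cs.wordProd (s :: L)))
    (hs : simpleRoot s ∈ movedSpace (geo cs) u) : rle cs (cs.simple s * u) (cs.wordProd L) := by
  simpa [cs.wordProd_cons] using (isRootOf_simpleRoot cs s).mul_rle_mul hs hu

theorem rle.apply_eq_zero_of_mem_movedSpace_simple_mul [Finite W] (hL : s ∉ L)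
    (hu : rle cs u (cs.wordProd (s :: L))) (hs : simpleRoot s ∈ movedSpace (geo cs) u) :
    ∀ x ∈ movedSpace (geo cs) (cs.simple s * u), x s = 0 := fun _ hx =>
  apply_eq_zero_of_mem_movedSpace_wordProd hL ((hu.simple_mul_rle_wordProd hs).movedSpace_le hx)

namespace IsConeCounterexample

theorem symm (h : IsConeCounterexample cs γ u w x) : IsConeCounterexample cs γ w u x :=
  ⟨h.right_rle, h.left_rle, h.mem_right, h.mem_left, fun _ hw hu => h.notMem hu hw⟩

theorem conj (h : IsConeCounterexample cs γ u w x) {g : W}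
    (hu : geo cs g x ∈ rootCone cs (g * u * g⁻¹)) (hw : geo cs g x ∈ rootCone cs (g * w * g⁻¹)) :
    IsConeCounterexample cs (g * γ * g⁻¹) (g * u * g⁻¹) (g * w * g⁻¹) (geo cs g x) := by
  refine ⟨h.left_rle.conj g, h.right_rle.conj g, hu, hw, fun v hvu hvw hv => ?_⟩
  refine h.notMem (v := g⁻¹ * v * g) (by simpa [mul_assoc] using hvu.conj g⁻¹)
    (by simpa [mul_assoc] using hvw.conj g⁻¹) ?_
  simpa using apply_mem_movedSpace_conj (geo cs) g⁻¹ hv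

variable [Finite W]

theorem simple_mul (h : IsConeCounterexample cs (cs.wordProd (s :: L)) u w x) (hL : s ∉ L)
    (hu : simpleRoot s ∈ movedSpace (geo cs) u) (hw : simpleRoot s ∈ movedSpace (geo cs) w) :
    IsConeCounterexample cs (cs.wordProd L) (cs.simple s * u) (cs.simple s * w)
      (x - x s • simpleRoot s) := by
  have hs := isRootOf_simpleRoot cs s
  refine ⟨h.left_rle.simple_mul_rle_wordProd hu, h.right_rle.simple_mul_rle_wordProd hw,
    sub_smul_simpleRoot_mem_rootCone hu
      (h.left_rle.apply_eq_zero_of_mem_movedSpace_simple_mul hL hu) h.mem_left,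
    sub_smul_simpleRoot_mem_rootCone hw
      (h.right_rle.apply_eq_zero_of_mem_movedSpace_simple_mul hL hw) h.mem_right, ?_⟩
  intro v hvu hvw hv
  have hsu := hs.rle_of_mem_movedSpace hu
  have hsw := hs.rle_of_mem_movedSpace hw
  rw [← cs.inv_simple] at hvu hvw
  have hsv : simpleRoot s ∈ movedSpace (geo cs) (cs.simple s * v) := by
    refine (hsu.rle_mul hvu).movedSpace_le ?_
    simpa using hs.mem_movedSpace_mul (g := 1) (by simpa using simpleRoot_ne_zero s)
  have hle : movedSpace (geo cs) v ≤ movedSpace (geo cs) (cs.simple s * v) := by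
    rw [hs.movedSpace_eq_sup_span hsv, hs.mul_self_mul]
    exact le_sup_left
  refine h.notMem (hsu.mul_rle hvu) (hsw.mul_rle hvw) ?_
  simpa using add_mem (hle hv) (Submodule.smul_mem _ (x s) hsv)

/-- The sign needed for the point to stay in the cone of `w` is supplied by the cone of `u`, which
reflects to a cone of positive roots. -/
theorem simple_conj_of_notMem (h : IsConeCounterexample cs (cs.wordProd (s :: L)) u w x)
    (hL : s ∉ L) (hu : simpleRoot s ∉ movedSpace (geo cs) u) :
    IsConeCounterexample cs (cs.wordProd (L ++ [s])) (cs.simple s * u * (cs.simple s)⁻¹)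
      (cs.simple s * w * (cs.simple s)⁻¹) (geo cs (cs.simple s) x) := by
  have hmem := geo_simple_mem_rootCone hu h.mem_left
  have hγ : cs.wordProd (L ++ [s]) = cs.simple s * cs.wordProd (s :: L) * (cs.simple s)⁻¹ := by
    simp [cs.wordProd_append, cs.wordProd_cons]
  rw [hγ]
  refine h.conj hmem ?_
  by_cases hw : simpleRoot s ∈ movedSpace (geo cs) w
  · exact geo_simple_mem_rootCone_of_apply_nonneg hw
      (h.right_rle.apply_eq_zero_of_mem_movedSpace_simple_mul hL hw) h.mem_right
      (nonneg_of_mem_rootCone hmem s)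
  · exact geo_simple_mem_rootCone hw h.mem_right

theorem simple_conj (h : IsConeCounterexample cs (cs.wordProd (s :: L)) u w x) (hL : s ∉ L)
    (ih : ∀ u w x, ¬ IsConeCounterexample cs (cs.wordProd L) u w x) :
    IsConeCounterexample cs (cs.wordProd (L ++ [s])) (cs.simple s * u * (cs.simple s)⁻¹)
      (cs.simple s * w * (cs.simple s)⁻¹) (geo cs (cs.simple s) x) := by
  by_cases hu : simpleRoot s ∈ movedSpace (geo cs) u
  · have hw : simpleRoot s ∉ movedSpace (geo cs) w := fun hw => ih _ _ _ (h.simple_mul hL hu hw)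
    exact (h.symm.simple_conj_of_notMem hL hw).symm
  · exact h.simple_conj_of_notMem hL hu

theorem wordProd_conj {L₁ L₂ : List B} (hL : (L₁ ++ L₂).Nodup)
    (ih : ∀ L : List B, L.Nodup → L.length < (L₁ ++ L₂).length →
      ∀ u w x, ¬ IsConeCounterexample cs (cs.wordProd L) u w x)
    (h : IsConeCounterexample cs (cs.wordProd (L₁ ++ L₂)) u w x) :
    IsConeCounterexample cs (cs.wordProd (L₂ ++ L₁))
      ((cs.wordProd L₁)⁻¹ * u * cs.wordProd L₁) ((cs.wordProd L₁)⁻¹ * w * cs.wordProd L₁)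
      (geo cs (cs.wordProd L₁)⁻¹ x) := by
  induction L₁ generalizing L₂ u w x with
  | nil => simpa using h
  | cons s L₁ ihL =>
    rw [List.cons_append] at h
    rw [List.cons_append, List.nodup_cons] at hL
    have hrot := h.simple_conj hL.1 (ih _ hL.2 (by simp))
    rw [List.append_assoc] at hrot
    have hnodup : (L₁ ++ (L₂ ++ [s])).Nodup := by
      rw [← List.append_assoc, (List.perm_append_singleton s _).nodup_iff]
      exact List.nodup_cons.2 hL
    have hconj := ihL hnodup (fun L hL hlen => ih L hL (by simpa [add_assoc] using hlen)) hrot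
    simpa [cs.wordProd_cons, geo_mul_apply, mul_assoc] using hconj

end IsConeCounterexample

/-- A minimal counterexample could be conjugated by the Coxeter element indefinitely, so that the
orbit of `x` would consist of nonnegative vectors, which forces `x = 0`. -/
theorem not_isConeCounterexample_wordProd [Finite W] (hL : L.Nodup) (u w : W) (x : B → ℝ) :
    ¬ IsConeCounterexample cs (cs.wordProd L) u w x := by
  induction hn : L.length using Nat.strong_induction_on generalizing L u w x with
  | _ n ih =>
  subst hn
  intro h
  set g := (cs.wordProd L)⁻¹ with hg
  have horbit (k : ℕ) : ∃ u w, IsConeCounterexample cs (cs.wordProd L) u w (geo cs (g ^ k) x) := by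
    induction k with
    | zero => exact ⟨u, w, by simpa using h⟩
    | succ k ihk =>
      obtain ⟨u, w, hk⟩ := ihk
      have hconj := IsConeCounterexample.wordProd_conj (L₁ := L) (L₂ := []) (by simpa using hL)
        (fun L' hL' hlen u w x => ih _ (by simpa using hlen) hL' u w x rfl)
        (by rwa [List.append_nil])
      rw [← geo_mul_apply, ← hg, ← pow_succ'] at hconj
      exact ⟨_, _, hconj⟩
  have hx : x ∈ movedSpace (geo cs) g := by
    rw [hg, movedSpace_inv]
    exact h.left_rle.movedSpace_le (mem_movedSpace_of_mem_rootCone h.mem_left)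
  have hx₀ : x = 0 := eq_zero_of_forall_pow_apply_nonneg hx fun k =>
    have ⟨_, _, hk⟩ := horbit k
    nonneg_of_mem_rootCone hk.mem_left
  exact h.notMem (one_rle u) (one_rle w) (hx₀ ▸ zero_mem _)

end Counterexample

section MomentCurve

variable {K V ι : Type*} [Field K] [CharZero K] [AddCommGroup V] [Module K V] {N : ℕ}

theorem eq_zero_of_infinite_sum_pow_mul_eq_zero (a : Fin N → K)
    (h : {n : ℕ | ∑ j : Fin N, (n : K) ^ (j : ℕ) * a j = 0}.Infinite) (j : Fin N) : a j = 0 := by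
  let p : Polynomial K := ∑ j : Fin N, Polynomial.monomial (j : ℕ) (a j)
  have hp : p = 0 := by
    refine Polynomial.eq_zero_of_infinite_isRoot p
      ((h.image Nat.cast_injective.injOn).mono ?_)
    rintro _ ⟨n, hn, rfl⟩
    simpa [p, Polynomial.eval_finsetSum, mul_comm] using hn
  simpa [p, Polynomial.coeff_monomial, Fin.val_inj] using congrArg (·.coeff j) hp

/-- Infinitely many points of the moment curve lie in one of the subspaces, and they span. -/
theorem exists_forall_mem_of_forall_exists_sum_pow_smul_mem [Finite ι] (U : ι → Submodule K V)
    (ρ : Fin N → V) (h : ∀ n : ℕ, ∃ i, ∑ j : Fin N, (n : K) ^ (j : ℕ) • ρ j ∈ U i) :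
    ∃ i, ∀ j, ρ j ∈ U i := by
  choose f hf using h
  obtain ⟨i, hi⟩ := Finite.exists_infinite_fiber f
  refine ⟨i, fun j => ?_⟩
  by_contra hj
  obtain ⟨φ, hφj, hφ⟩ := Submodule.exists_le_ker_of_notMem hj
  refine hφj (eq_zero_of_infinite_sum_pow_mul_eq_zero (fun j => φ (ρ j))
    ((Set.infinite_coe_iff.1 hi).mono ?_) j)
  rintro n rfl
  simpa using hφ (hf n)

end MomentCurve

section Meet

variable [Finite W] {cs : CoxeterSystem M W}

theorem exists_rle_rle_posRoots_subset_movedSpace [Fintype B] [DecidableEq B] {L : List B}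
    (hL : L.Nodup) {u w : W} (hu : rle cs u (cs.wordProd L)) (hw : rle cs w (cs.wordProd L)) :
    ∃ v, rle cs v u ∧ rle cs v w ∧
      posRoots cs u ∩ posRoots cs w ⊆ movedSpace (geo cs) v := by
  have hfin : (posRoots cs u ∩ posRoots cs w).Finite :=
    (finite_setOf_isRootOf cs).subset fun β hβ => hβ.1.1
  obtain ⟨N, ρ, -, hρ⟩ := hfin.fin_param
  have hmem (j : Fin N) : ρ j ∈ posRoots cs u ∩ posRoots cs w := hρ ▸ Set.mem_range_self j
  obtain ⟨⟨v, hvu, hvw⟩, hv⟩ := exists_forall_mem_of_forall_exists_sum_pow_smul_mem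
    (fun v : {v // rle cs v u ∧ rle cs v w} => movedSpace (geo cs) v.1) ρ fun n => by
      by_contra! hcon
      exact not_isConeCounterexample_wordProd hL u w _ ⟨hu, hw,
        sum_mem fun j _ => PointedCone.smul_mem _ (by positivity)
          (PointedCone.subset_hull (hmem j).1),
        sum_mem fun j _ => PointedCone.smul_mem _ (by positivity)
          (PointedCone.subset_hull (hmem j).2),
        fun v hvu hvw => hcon ⟨v, hvu, hvw⟩⟩
  refine ⟨v, hvu, hvw, ?_⟩
  rw [← hρ]
  rintro _ ⟨j, rfl⟩
  exact hv j

theorem hasMeets_wordProd [Finite B] {L : List B} (hL : L.Nodup) : HasMeets cs (cs.wordProd L) := by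
  classical
  cases nonempty_fintype B
  intro u w hu hw
  obtain ⟨v, hvu, hvw, hv⟩ := exists_rle_rle_posRoots_subset_movedSpace hL hu hw
  refine ⟨v, hvu, hvw, fun z hzu hzw => rle_of_movedSpace_le (hzu.trans hu) (hvu.trans hu) ?_⟩
  refine (movedSpace_le_span_posRoots z).trans (Submodule.span_le.2 fun β hβ => hv ?_)
  exact ⟨posRoots_mono hzu.movedSpace_le hβ, posRoots_mono hzw.movedSpace_le hβ⟩

theorem IsCoxeterElement.hasMeets [Fintype B] {γ : W} (hγ : IsCoxeterElement cs γ) :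
    HasMeets cs γ := by
  obtain ⟨g, L, hL, -, rfl⟩ := hγ
  exact (hasMeets_wordProd hL).conj g

end Meet

/-- Brady's embedding theorem: the positive monoid `Γ₊(W,γ)` embeds into the poset
group `Γ(W,γ)`; equivalently, positive words equal in `Γ` are positively equal. -/
theorem posMonoid_embeds [Fintype B] [Fintype W] (cs : CoxeterSystem M W) (γ : W)
    (hγ : IsCoxeterElement cs γ) :
    Function.Injective (canHom cs γ) :=
  canHom_injective_of_hasMeets hγ.hasMeets
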